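/- arXiv:1805.11871 — 4 statements merged into one kernel-verified Lean document; each statement's English description precedes it below -/
import Mathlib

section
/- Suppose a simplex Δ (the standard (n-1)-simplex in ℝⁿ) is covered by closed sets C₁, ..., Cₙ such that for every nonempty subset I ⊆ {1,...,n}, the face of Δ spanned by the vertices {eᵢ : i ∈ I} is contained in ⋃_{i ∈ I} Cᵢ. Then ⋂_{i=1}^{n} Cᵢ is nonempty. -/
/-!
Color each point `x` of the simplex by an index `i` with `0 < x i` and `x ∈ C i`, which is possible
because `x` lies on the face spanned by its support. It suffices to find, for every `ε > 0`, points
of all colors within `ε` of each other: compactness then yields a common point.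

Instead of triangulating the simplex, take a finite net `T` of all its faces and compare its points
by each of their coordinates. Scarf's parity argument, which uses nothing but these orders, gives
`σ ⊆ T` such that every `y ∈ T` satisfies `max_{x ∈ σ} x i ≤ y i` for some color `i` of `σ`. A
vertex `y` violates this for every color but its own, so all colors occur in `σ`. The maxima over
`σ` then have sum close to `1`, since otherwise a point of `T` would lie strictly below all of them;
as every point of `σ` has coordinate sum `1` and is bounded by these maxima, `σ` has small diameter.
-/

open Finset

namespace Scarf

section Counting

variable {X : Type*} [DecidableEq X]

theorem sum_card_erase_mem_eq_sum_card_insert_mem [Fintype X] (A B : Finset (Finset X)) :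
    ∑ S ∈ A, #{x ∈ S | S.erase x ∈ B} = ∑ R ∈ B, #{x ∈ Rᶜ | insert x R ∈ A} := by
  simp only [← card_sigma]
  refine card_nbij' (fun q => ⟨q.1.erase q.2, q.2⟩) (fun q => ⟨insert q.2 q.1, q.2⟩) ?_ ?_ ?_ ?_
  all_goals
    rintro ⟨S, x⟩ h
    simp_all

/-- If some `x` is counted, then `f` is injective on `S.erase x` and takes the value `f x` at a
unique `x' ≠ x`; exactly `x` and `x'` are counted. -/
theorem even_card_image_erase_eq {Y : Type*} [DecidableEq Y] {f : X → Y} {S : Finset X}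
    {K : Finset Y} (hcard : #S = #K + 1) (hmaps : S.image f ⊆ K) :
    Even #{x ∈ S | (S.erase x).image f = K} := by
  rcases eq_empty_or_nonempty {x ∈ S | (S.erase x).image f = K} with hempty | ⟨x, hx⟩
  · simp [hempty]
  obtain ⟨hxS, hxK⟩ := mem_filter.1 hx
  have hinj : Set.InjOn f (S.erase x) :=
    card_image_iff.1 (by rw [hxK, card_erase_of_mem hxS, hcard, Nat.add_sub_cancel])
  obtain ⟨x', hx', hfx'⟩ : ∃ x' ∈ S.erase x, f x' = f x :=
    mem_image.1 (hxK ▸ hmaps (mem_image_of_mem f hxS))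
  have hpair : {z ∈ S | (S.erase z).image f = K} = {x, x'} := by
    ext z
    simp only [mem_filter, mem_insert, mem_singleton]
    constructor
    · rintro ⟨hzS, hzK⟩
      obtain ⟨w, hw, hwz⟩ := mem_image.1 (hzK ▸ hmaps (mem_image_of_mem f hzS))
      by_contra! hz
      have hwx : w = x := by
        by_contra hwx
        exact ne_of_mem_erase hw
          (hinj (by simp_all) (by simp_all) hwz)
      exact hz.2 (hinj (by simp_all) hx' (by simp_all))
    · rintro (rfl | rfl)
      · exact ⟨hxS, hxK⟩
      · refine ⟨mem_of_mem_erase hx', ?_⟩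
        rw [← hxK]
        ext y
        simp only [mem_image, mem_erase] at hx' ⊢
        grind
  rw [hpair, card_pair (ne_of_mem_erase hx').symm]
  exact even_two

theorem eq_image_of_image_eq {Y : Type*} [DecidableEq Y] {c : X → Y} {s : Y → X}
    (hc : Function.LeftInverse c s) {R : Finset X} {K : Finset Y} (hR : R.image c = K)
    (hRs : ↑R ⊆ Set.range s) : R = K.image s := by
  subst hR
  rw [image_image]
  refine (image_id.symm.trans (image_congr fun x hx => ?_))
  obtain ⟨i, rfl⟩ := hRs hx
  simp [hc i]

end Counting

section Dominant

variable {X ι α : Type*} [LinearOrder α] {u : ι → X → α} {p : ι → X} {R S : Finset X} {i j : ι}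
  {x y : X}

/-- Scarf's dominant sets: no point of `X` lies, in each of the preorders given by the `u i`,
strictly below some point of `S`. -/
def IsDominant (u : ι → X → α) (S : Finset X) : Prop :=
  ∀ y, ∃ i, ∀ x ∈ S, u i x ≤ u i y

/-- A choice `p i` of a point of `S` that is maximal for `u i`, for every index `i`. -/
def IsArgmax (u : ι → X → α) (S : Finset X) (p : ι → X) : Prop :=
  ∀ i, p i ∈ S ∧ ∀ x ∈ S, u i x ≤ u i (p i)

/-- The point that enters when the index `i` is released in a pivot step of Scarf's algorithm: the
`u i`-minimal one among the points that lie strictly below `p j` for all other indices `j`. -/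
def IsPivot (u : ι → X → α) (p : ι → X) (i : ι) (x : X) : Prop :=
  (∀ j ≠ i, u j x < u j (p j)) ∧ ∀ y, (∀ j ≠ i, u j y < u j (p j)) → u i x ≤ u i y

theorem IsDominant.mono (hS : IsDominant u S) (hRS : R ⊆ S) : IsDominant u R := fun y =>
  (hS y).imp fun _ hi x hx => hi x (hRS hx)

theorem exists_isArgmax (u : ι → X → α) (hS : S.Nonempty) : ∃ p, IsArgmax u S p := by
  choose p hpS hp using fun i => exists_max_image S (u i) hS
  exact ⟨p, fun i => ⟨hpS i, hp i⟩⟩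

theorem IsArgmax.image_univ [Fintype ι] [DecidableEq X] (hp : IsArgmax u S p)
    (hu : ∀ i, Function.Injective (u i)) (hS : IsDominant u S) : univ.image p = S := by
  refine Subset.antisymm (image_subset_iff.2 fun i _ => (hp i).1) fun x hx => ?_
  obtain ⟨i, hi⟩ := hS x
  exact mem_image.2 ⟨i, mem_univ i, hu i (le_antisymm (hi _ (hp i).1) ((hp i).2 x hx))⟩

theorem exists_isPivot [Finite X] (h : ∃ x, ∀ j ≠ i, u j x < u j (p j)) :
    ∃ x, IsPivot u p i x := by
  obtain ⟨x, hx, hmin⟩ := Set.exists_min_image {x | ∀ j ≠ i, u j x < u j (p j)} (u i)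
    (Set.toFinite _) h
  exact ⟨x, hx, hmin⟩

theorem IsPivot.eq (hx : IsPivot u p i x) (hy : IsPivot u p i y)
    (hu : Function.Injective (u i)) : x = y :=
  hu (le_antisymm (hx.2 y hy.1) (hy.2 x hx.1))

theorem IsPivot.index_eq (hi : IsPivot u p i x) (hj : IsPivot u p j x) (hp : IsArgmax u R p)
    (hR : IsDominant u R) : i = j := by
  by_contra hij
  obtain ⟨k, hk⟩ := hR x
  have hlt : u k x < u k (p k) := by
    by_cases hki : k = i
    · exact hj.1 k (hki ▸ hij)
    · exact hi.1 k hki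
  exact hlt.not_ge (hk _ (hp k).1)

theorem IsPivot.notMem [Fintype ι] [DecidableEq ι] [DecidableEq X] (hx : IsPivot u p i x)
    (hi : (univ.erase i).image p = R) : x ∉ R := by
  rintro hxR
  obtain ⟨j, hj, rfl⟩ := mem_image.1 (hi ▸ hxR)
  exact lt_irrefl _ (hx.1 j (ne_of_mem_erase hj))

theorem IsPivot.isDominant_insert [DecidableEq X] (hx : IsPivot u p i x) (hp : IsArgmax u R p)
    (hR : IsDominant u R) : IsDominant u (insert x R) := by
  intro y
  by_contra! hy
  have hlt : ∀ j ≠ i, u j y < u j (p j) := by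
    intro j hj
    obtain ⟨z, hz, hyz⟩ := hy j
    rcases mem_insert.1 hz with rfl | hz
    · exact hyz.trans (hx.1 j hj)
    · exact hyz.trans_le ((hp j).2 z hz)
  have hlt_i : u i y < u i (p i) := by
    obtain ⟨z, hz, hyz⟩ := hy i
    rcases mem_insert.1 hz with rfl | hz
    · exact absurd (hx.2 y hlt) hyz.not_ge
    · exact hyz.trans_le ((hp i).2 z hz)
  obtain ⟨k, hk⟩ := hR y
  have hlt_k : u k y < u k (p k) := by
    by_cases hki : k = i
    · exact hki ▸ hlt_i
    · exact hlt k hki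
  exact hlt_k.not_ge (hk _ (hp k).1)

theorem IsDominant.exists_isPivot_of_insert [Fintype ι] [DecidableEq ι] [DecidableEq X]
    (hS : IsDominant u (insert x R)) (hu : ∀ i, Function.Injective (u i)) (hp : IsArgmax u R p)
    (hcard : #R + 1 = Fintype.card ι) (hx : x ∉ R) :
    ∃ i, (univ.erase i).image p = R ∧ IsPivot u p i x := by
  obtain ⟨q, hq⟩ := exists_isArgmax u (insert_nonempty x R)
  have hqim : univ.image q = insert x R := hq.image_univ hu hS
  have hqinj : Function.Injective q := by
    rw [← Set.injOn_univ, ← coe_univ, ← card_image_iff, hqim, card_insert_of_notMem hx, hcard,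
      card_univ]
  obtain ⟨i, -, hqi⟩ := mem_image.1 (hqim ▸ mem_insert_self x R)
  have hqp : ∀ j ≠ i, q j = p j := by
    intro j hj
    have hqjR : q j ∈ R :=
      mem_of_mem_insert_of_ne (hq j).1 (hqi ▸ hqinj.ne hj)
    exact hu j (le_antisymm ((hp j).2 _ hqjR) ((hq j).2 _ (mem_insert_of_mem (hp j).1)))
  refine ⟨i, ?_, fun j hj => ?_, fun y hy => ?_⟩
  · calc (univ.erase i).image p = (univ.erase i).image q :=
          image_congr fun j hj => (hqp j (ne_of_mem_erase hj)).symm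
      _ = (univ.image q).erase (q i) := image_erase hqinj _ _
      _ = R := by rw [hqim, hqi, erase_insert hx]
  · refine lt_of_le_of_ne (hqp j hj ▸ (hq j).2 x (mem_insert_self x R)) fun h => ?_
    exact hx (hu j h ▸ (hp j).1)
  · obtain ⟨k, hk⟩ := hS y
    have hki : k = i := by
      by_contra hki
      exact (hy k hki).not_ge (hk _ (mem_insert_of_mem (hp k).1))
    exact hki ▸ hk x (mem_insert_self x R)

/-- The dominant sets `insert x R` correspond, through the pivots `x`, to the indices whose removal
keeps an argmax of `R` surjective, and there are none or two of these. -/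
theorem even_card_isDominant_insert [Fintype X] [Fintype ι] [DecidableEq X]
    [DecidablePred (IsDominant u)] (hu : ∀ i, Function.Injective (u i))
    (hcard : #R + 1 = Fintype.card ι) (hR : R.Nonempty)
    (hbelow : ∀ i, ∃ x, ∀ j ≠ i, ∃ y ∈ R, u j x < u j y) :
    Even #{x ∈ Rᶜ | IsDominant u (insert x R)} := by
  classical
  by_cases hRdom : IsDominant u R
  swap
  · rw [filter_false_of_mem fun x _ hx => hRdom (hx.mono (subset_insert x R))]
    exact Even.zero
  obtain ⟨p, hp⟩ := exists_isArgmax u hR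
  have hpivot : ∀ i, ∃ x, IsPivot u p i x := fun i => exists_isPivot <| (hbelow i).imp
    fun x hx j hj => let ⟨y, hy, hlt⟩ := hx j hj; hlt.trans_le ((hp j).2 y hy)
  choose e he using hpivot
  have hbij : #{i ∈ (univ : Finset ι) | (univ.erase i).image p = R} =
      #{x ∈ Rᶜ | IsDominant u (insert x R)} := by
    refine card_nbij e (fun i hi => ?_) (fun i _ j _ hij => ?_) fun x hx => ?_
    · simp only [mem_coe, mem_filter, mem_univ, true_and, mem_compl] at hi ⊢
      exact ⟨(he i).notMem hi, (he i).isDominant_insert hp hRdom⟩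
    · exact (he i).index_eq (hij ▸ he j) hp hRdom
    · simp only [mem_coe, mem_filter, mem_compl] at hx
      obtain ⟨i, hi, hix⟩ := hx.2.exists_isPivot_of_insert hu hp hcard hx.1
      exact ⟨i, by simpa using hi, (he i).eq hix (hu i)⟩
  rw [← hbij]
  exact even_card_image_erase_eq (by rw [card_univ, hcard]) (hp.image_univ hu hRdom).le

end Dominant

section Slack

variable {X ι α : Type*} [LinearOrder α] {u : ι → X → α} {s : ι → X} {t x : X}

/-- Scarf's slack points, which play the role of the vertices of a large simplex around the other
points: `s i` is `u i`-maximal, and `s j` is for `j ≠ i` strictly `u i`-below all other points. -/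
structure IsSlack (u : ι → X → α) (s : ι → X) : Prop where
  le_apply : ∀ i x, u i x ≤ u i (s i)
  lt_of_ne : ∀ i j, j ≠ i → ∀ x ∉ Set.range s, u i (s j) < u i x

theorem IsSlack.even_card_isDominant_insert [Fintype X] [Fintype ι] [DecidableEq X]
    [DecidablePred (IsDominant u)] (hs : IsSlack u s) (hu : ∀ i, Function.Injective (u i))
    {R : Finset X} (hcard : #R + 1 = Fintype.card ι) (htR : t ∈ R) (ht : t ∉ Set.range s) :
    Even #{x ∈ Rᶜ | IsDominant u (insert x R)} :=
  Scarf.even_card_isDominant_insert hu hcard ⟨t, htR⟩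
    fun i => ⟨s i, fun j hj => ⟨t, htR, hs.lt_of_ne j i hj.symm t ht⟩⟩

variable [Fintype ι] [DecidableEq ι] [DecidableEq X]

theorem IsSlack.isDominant_insert_iff (hs : IsSlack u s) (hu : ∀ i, Function.Injective (u i))
    (ht : t ∉ Set.range s) (i₀ : ι) (hx : x ∉ (univ.erase i₀).image s) :
    IsDominant u (insert x ((univ.erase i₀).image s)) ↔
      x ∉ Set.range s ∧ ∀ y ∉ Set.range s, u i₀ x ≤ u i₀ y := by
  constructor
  · intro hdom
    have hle : ∀ y ∉ Set.range s, u i₀ x ≤ u i₀ y := by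
      intro y hy
      obtain ⟨i, hi⟩ := hdom y
      have hii₀ : i = i₀ := by
        by_contra hii₀
        have hsy := hi (s i)
          (mem_insert_of_mem (mem_image_of_mem s (mem_erase.2 ⟨hii₀, mem_univ i⟩)))
        exact hy ⟨i, hu i (le_antisymm hsy (hs.le_apply i y))⟩
      exact hii₀ ▸ hi x (mem_insert_self _ _)
    refine ⟨?_, hle⟩
    rintro ⟨i, rfl⟩
    have hii₀ : i = i₀ := by
      by_contra hii₀
      exact hx (mem_image_of_mem s (mem_erase.2 ⟨hii₀, mem_univ i⟩))
    subst hii₀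
    exact ht ⟨i, hu i (le_antisymm (hle t ht) (hs.le_apply i t))⟩
  · rintro ⟨-, hmin⟩ y
    by_cases hy : y ∈ Set.range s
    · obtain ⟨i, rfl⟩ := hy
      exact ⟨i, fun z _ => hs.le_apply i z⟩
    · refine ⟨i₀, fun z hz => ?_⟩
      rcases mem_insert.1 hz with rfl | hz
      · exact hmin y hy
      · obtain ⟨j, hj, rfl⟩ := mem_image.1 hz
        exact (hs.lt_of_ne i₀ j (ne_of_mem_erase hj) y hy).le

theorem IsSlack.card_isDominant_insert [Fintype X] [DecidablePred (IsDominant u)]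
    (hs : IsSlack u s) (hu : ∀ i, Function.Injective (u i)) (ht : t ∉ Set.range s) (i₀ : ι) :
    #{x ∈ ((univ.erase i₀).image s)ᶜ | IsDominant u (insert x ((univ.erase i₀).image s))} = 1 := by
  obtain ⟨m, hm, hmin⟩ := Set.exists_min_image (Set.range s)ᶜ (u i₀) (Set.toFinite _) ⟨t, ht⟩
  refine card_eq_one.2 ⟨m, ?_⟩
  ext x
  simp only [mem_filter, mem_compl, mem_singleton]
  constructor
  · rintro ⟨hx, hdom⟩
    obtain ⟨hxs, hxmin⟩ := (hs.isDominant_insert_iff hu ht i₀ hx).1 hdom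
    exact hu i₀ (le_antisymm (hxmin m hm) (hmin x hxs))
  · rintro rfl
    have hx : x ∉ (univ.erase i₀).image s := fun hx =>
      let ⟨i, _, hi⟩ := mem_image.1 hx; hm ⟨i, hi⟩
    exact ⟨hx, (hs.isDominant_insert_iff hu ht i₀ hx).2 ⟨hm, hmin⟩⟩

end Slack

section Coloring

variable {X ι α : Type*} [Fintype ι] [LinearOrder α]

theorem even_card_image_erase_eq_univ_erase [DecidableEq X] [DecidableEq ι] {c : X → ι}
    {S : Finset X} (hcard : #S = Fintype.card ι) (hS : S.image c ≠ univ) (i₀ : ι) :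
    Even #{x ∈ S | (S.erase x).image c = univ.erase i₀} := by
  by_cases hi₀ : i₀ ∈ S.image c
  · rw [filter_false_of_mem fun x _ hx => hS ?_]
    · exact Even.zero
    rw [eq_univ_iff_forall]
    intro i
    by_cases hi : i = i₀
    · exact hi ▸ hi₀
    · exact image_subset_image (erase_subset x S) (hx ▸ by simp [hi])
  · refine even_card_image_erase_eq ?_ fun i hi => by grind
    rw [hcard, card_erase_add_one (mem_univ i₀), card_univ]

/-- Scarf's lemma: double count the pairs of a dominant set `S` with as many points as there are
indices and a point of `S` whose removal leaves exactly the colors other than `i₀`. -/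
theorem IsSlack.exists_isDominant_image_eq_univ [Finite X] [DecidableEq ι] {u : ι → X → α}
    {s : ι → X} {t : X} (hs : IsSlack u s) (hu : ∀ i, Function.Injective (u i))
    (ht : t ∉ Set.range s) {c : X → ι} (hc : Function.LeftInverse c s) (i₀ : ι) :
    ∃ S, IsDominant u S ∧ S.image c = univ := by
  classical
  have := Fintype.ofFinite X
  by_contra! hno
  let rooms : Finset (Finset X) := {S | #S = Fintype.card ι ∧ IsDominant u S}
  let doors : Finset (Finset X) := {R | #R + 1 = Fintype.card ι ∧ R.image c = univ.erase i₀}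
  let outer : Finset X := (univ.erase i₀).image s
  have houter : outer ∈ doors := by
    have hcard : #outer + 1 = Fintype.card ι := by
      rw [card_image_of_injective _ hc.injective, card_erase_add_one (mem_univ i₀), card_univ]
    simp [doors, hcard, outer, image_image, hc.comp_eq_id]
  have hdoors_of_room : ∀ S ∈ rooms, Even #{x ∈ S | S.erase x ∈ doors} := by
    intro S hS
    obtain ⟨hcard, hdom⟩ := (mem_filter.1 hS).2
    convert even_card_image_erase_eq_univ_erase hcard (hno S hdom) i₀ using 3 with x hx
    simp [doors, card_erase_add_one hx, hcard]
  have hrooms_of_door : ∀ R ∈ doors,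
      #{x ∈ Rᶜ | insert x R ∈ rooms} = #{x ∈ Rᶜ | IsDominant u (insert x R)} := by
    intro R hR
    refine congrArg card (filter_congr fun x hx => ?_)
    simp [rooms, card_insert_of_notMem (mem_compl.1 hx), (mem_filter.1 hR).2.1]
  have hinner : ∀ R ∈ doors.erase outer, Even #{x ∈ Rᶜ | insert x R ∈ rooms} := by
    intro R hR
    obtain ⟨hne, hRdoor⟩ := mem_erase.1 hR
    obtain ⟨hcard, himage⟩ := (mem_filter.1 hRdoor).2
    obtain ⟨t', ht'R, ht's⟩ := Set.not_subset.1 (mt (eq_image_of_image_eq hc himage) hne)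
    rw [hrooms_of_door R hRdoor]
    exact hs.even_card_isDominant_insert hu hcard ht'R ht's
  have heven : Even (∑ S ∈ rooms, #{x ∈ S | S.erase x ∈ doors}) := even_sum _ hdoors_of_room
  rw [sum_card_erase_mem_eq_sum_card_insert_mem, ← add_sum_erase _ _ houter,
    hrooms_of_door _ houter, hs.card_isDominant_insert hu ht i₀] at heven
  exact Nat.not_even_one ((Nat.even_add.1 heven).2 (even_sum _ hinner))

end Coloring

section SlackExtension

variable {T ι α : Type*} [Finite T] [Finite ι]

open Classical in
/-- The extension of `u` to additional slack points `Sum.inr i`. The second component is an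
arbitrary enumeration, which breaks ties. -/
noncomputable def slackExtension (u : ι → T → α) (i : ι) (x : T ⊕ ι) :
    WithBot (WithTop α) ×ₗ Fin (Nat.card (T ⊕ ι)) :=
  toLex (Sum.elim (fun t => ↑(u i t : WithTop α)) (fun j => if j = i then ⊤ else ⊥) x,
    Finite.equivFin (T ⊕ ι) x)

theorem slackExtension_injective (u : ι → T → α) (i : ι) :
    Function.Injective (slackExtension u i) := fun _ _ h =>
  (Finite.equivFin (T ⊕ ι)).injective (congrArg (fun z => (ofLex z).2) h)

variable [LinearOrder α]

theorem le_of_slackExtension_inl_le {u : ι → T → α} {i : ι} {x y : T}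
    (h : slackExtension u i (Sum.inl x) ≤ slackExtension u i (Sum.inl y)) : u i x ≤ u i y := by
  simpa [slackExtension] using Prod.Lex.monotone_fst _ _ h

theorem slackExtension_inl_lt_inr_self (u : ι → T → α) (i : ι) (x : T) :
    slackExtension u i (Sum.inl x) < slackExtension u i (Sum.inr i) :=
  Prod.Lex.toLex_lt_toLex.2 <| Or.inl <| by
    simpa using WithBot.coe_lt_coe.2 (WithTop.coe_lt_top (u i x))

theorem slackExtension_inr_lt_inr_self (u : ι → T → α) {i j : ι} (hji : j ≠ i) :
    slackExtension u i (Sum.inr j) < slackExtension u i (Sum.inr i) :=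
  Prod.Lex.toLex_lt_toLex.2 <| Or.inl <| by simp [hji]

theorem slackExtension_inr_lt_inl (u : ι → T → α) {i j : ι} (hji : j ≠ i) (x : T) :
    slackExtension u i (Sum.inr j) < slackExtension u i (Sum.inl x) :=
  Prod.Lex.toLex_lt_toLex.2 <| Or.inl <| by simp [hji]

theorem isSlack_slackExtension (u : ι → T → α) : IsSlack (slackExtension u) Sum.inr where
  le_apply
    | i, Sum.inl x => (slackExtension_inl_lt_inr_self u i x).le
    | i, Sum.inr j => by
      rcases eq_or_ne j i with rfl | hji
      · exact le_rfl
      · exact (slackExtension_inr_lt_inr_self u hji).le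
  lt_of_ne
    | _, _, hji, Sum.inl x, _ => slackExtension_inr_lt_inl u hji x
    | _, _, _, Sum.inr k, hk => absurd (Set.mem_range_self k) hk

/-- Here the indices themselves are restricted to the colors that occur in `σ`. -/
theorem exists_isDominant_comp_color (u : ι → T → α) (c : T → ι) :
    ∃ σ : Finset T, IsDominant (fun x : σ => u (c x)) σ := by
  classical
  have := Fintype.ofFinite ι
  rcases isEmpty_or_nonempty T with hT | ⟨⟨t⟩⟩
  · exact ⟨∅, fun y => hT.elim y⟩
  obtain ⟨S, hdom, himage⟩ := (isSlack_slackExtension u).exists_isDominant_image_eq_univ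
    (slackExtension_injective u) (t := Sum.inl t) (by simp) (c := Sum.elim c id)
    (fun _ => rfl) (c t)
  refine ⟨S.toLeft, fun y => ?_⟩
  obtain ⟨i, hi⟩ := hdom (Sum.inl y)
  obtain ⟨x | j, hxS, rfl⟩ := mem_image.1 (himage ▸ mem_univ i)
  · exact ⟨⟨x, mem_toLeft.2 hxS⟩,
      fun z hz => le_of_slackExtension_inl_le (hi _ (mem_toLeft.1 hz))⟩
  · exact absurd (hi _ hxS) (slackExtension_inl_lt_inr_self u j y).not_ge

end SlackExtension

end Scarf

section Simplex

variable {ι : Type*} [Fintype ι]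

theorem exists_mem_stdSimplex_le {f : ι → ℝ} (hf : 0 ≤ f) (hsum : 1 ≤ ∑ i, f i) :
    ∃ x ∈ stdSimplex ℝ ι, x ≤ f := by
  have hpos : 0 < ∑ i, f i := one_pos.trans_le hsum
  refine ⟨fun i => f i / ∑ j, f j, ⟨fun i => div_nonneg (hf i) hpos.le, ?_⟩,
    fun i => div_le_self (hf i) hsum⟩
  rw [← sum_div, div_self hpos.ne']

theorem dist_le_of_mem_stdSimplex_of_le {x y M : ι → ℝ} {ε : ℝ} (hx : x ∈ stdSimplex ℝ ι)
    (hy : y ∈ stdSimplex ℝ ι) (hxM : x ≤ M) (hyM : y ≤ M) (hM : ∑ i, M i ≤ 1 + ε) :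
    dist x y ≤ ε := by
  have hlower : ∀ z ∈ stdSimplex ℝ ι, z ≤ M → ∀ i, M i - ε ≤ z i := by
    intro z hz hzM i
    have hgap : M i - z i ≤ ∑ j, (M j - z j) :=
      single_le_sum (f := fun j => M j - z j) (fun j _ => sub_nonneg.2 (hzM j)) (mem_univ i)
    rw [sum_sub_distrib, hz.2] at hgap
    linarith
  have hε : 0 ≤ ε := by
    have := sum_le_sum fun i (_ : i ∈ univ) => hxM i
    rw [hx.2] at this
    linarith
  refine (dist_pi_le_iff hε).2 fun i => ?_
  rw [Real.dist_eq, abs_le]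
  constructor <;> linarith [hlower x hx hxM i, hlower y hy hyM i, hxM i, hyM i]

theorem exists_finite_net_stdSimplex {δ : ℝ} (hδ : 0 < δ) :
    ∃ T : Set (ι → ℝ), T.Finite ∧ T ⊆ stdSimplex ℝ ι ∧
      ∀ x ∈ stdSimplex ℝ ι, ∃ y ∈ T, dist y x < δ ∧ ∀ i, x i = 0 → y i = 0 := by
  let face (J : Set ι) : Set (ι → ℝ) := stdSimplex ℝ ι ∩ {x | ∀ i ∈ J, x i = 0}
  have hcompact (J : Set ι) : IsCompact (face J) := by
    refine (isCompact_stdSimplex ℝ ι).inter_right ?_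
    simp only [Set.ofPred_forall]
    exact isClosed_biInter fun i _ => isClosed_eq (continuous_apply i) continuous_const
  choose t htface htfin hcover using fun J => (hcompact J).finite_cover_balls hδ
  refine ⟨⋃ J, t J, Set.finite_iUnion htfin,
    Set.iUnion_subset fun J => (htface J).trans Set.inter_subset_left, fun x hx => ?_⟩
  obtain ⟨y, hy, hxy⟩ := Set.mem_iUnion₂.1 (hcover {i | x i = 0} ⟨hx, fun _ h => h⟩)
  exact ⟨y, Set.mem_iUnion.2 ⟨_, hy⟩, Metric.mem_ball'.1 hxy, (htface _ hy).2⟩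

/-- Rounding down by `δ`, but not below `0`, leaves the total at least `1`; so there is a point of
the simplex below the result, and the net point near it vanishes where the rounded `M` does. -/
theorem exists_mem_forall_lt_of_net {T : Set (ι → ℝ)} {δ : ℝ}
    (hT : ∀ x ∈ stdSimplex ℝ ι, ∃ y ∈ T, dist y x < δ ∧ ∀ i, x i = 0 → y i = 0)
    {M : ι → ℝ} (hpos : ∀ i, 0 < M i) (hM : 1 + Fintype.card ι * δ ≤ ∑ i, M i) :
    ∃ y ∈ T, ∀ i, y i < M i := by
  have hround : 1 ≤ ∑ i, max (M i - δ) 0 := by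
    calc 1 ≤ ∑ i, (M i - δ) := by
          rw [sum_sub_distrib, sum_const, card_univ, nsmul_eq_mul]
          linarith
      _ ≤ ∑ i, max (M i - δ) 0 := sum_le_sum fun i _ => le_max_left _ _
  obtain ⟨x, hx, hxM⟩ := exists_mem_stdSimplex_le (fun i => le_max_right (M i - δ) 0) hround
  obtain ⟨y, hy, hyx, hy0⟩ := hT x hx
  refine ⟨y, hy, fun i => ?_⟩
  rcases (hx.1 i).eq_or_lt with hxi | hxi
  · rw [hy0 i hxi.symm]
    exact hpos i
  · have hxi_le : x i ≤ M i - δ := (le_max_iff.1 (hxM i)).resolve_right hxi.not_ge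
    have hyxi : |y i - x i| < δ := (dist_le_pi_dist y x i).trans_lt hyx
    linarith [(abs_lt.1 hyxi).2]

theorem exists_dist_le_of_forall_pos [Nonempty ι] {c : (ι → ℝ) → ι}
    (hc : ∀ x ∈ stdSimplex ℝ ι, 0 < x (c x)) {ε : ℝ} (hε : 0 < ε) :
    ∃ z : ι → ι → ℝ, (∀ i, z i ∈ stdSimplex ℝ ι ∧ c (z i) = i) ∧ ∀ i j, dist (z i) (z j) ≤ ε := by
  classical
  obtain ⟨T, hTfin, hTsub, hTnet⟩ := exists_finite_net_stdSimplex (ι := ι)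
    (div_pos hε (Nat.cast_pos.2 Fintype.card_pos : (0 : ℝ) < Fintype.card ι))
  have := hTfin.to_subtype
  obtain ⟨σ, hσ⟩ := Scarf.exists_isDominant_comp_color (fun i (x : T) => x.1 i) (fun x => c x.1)
  have hcolor : ∀ i, ∃ x ∈ σ, c x.1 = i := by
    intro i
    obtain ⟨y, hyT, -, hy0⟩ := hTnet _ (single_mem_stdSimplex ℝ i)
    obtain ⟨⟨x, hx⟩, hle⟩ := hσ ⟨y, hyT⟩
    refine ⟨x, hx, ?_⟩
    by_contra hxi
    exact (hc x.1 (hTsub x.2)).not_ge ((hle x hx).trans_eq (hy0 _ (Pi.single_eq_of_ne hxi 1)))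
  choose z hzσ hzc using hcolor
  obtain ⟨p, hp⟩ := Scarf.exists_isArgmax (fun i (x : T) => x.1 i)
    ⟨z (Classical.arbitrary ι), hzσ _⟩
  have hpos : ∀ i, 0 < (p i).1 i := by
    intro i
    have hzi := hc (z i).1 (hTsub (z i).2)
    rw [hzc i] at hzi
    exact hzi.trans_le ((hp i).2 _ (hzσ i))
  have hsum : ∑ i, (p i).1 i ≤ 1 + ε := by
    by_contra! hlt
    obtain ⟨y, hyT, hy⟩ := exists_mem_forall_lt_of_net hTnet hpos
      (by rw [mul_div_cancel₀ _ (Nat.cast_ne_zero.2 Fintype.card_ne_zero)]; exact hlt.le)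
    obtain ⟨x, hle⟩ := hσ ⟨y, hyT⟩
    exact (hy (c x.1.1)).not_ge (hle _ (hp _).1)
  have hmem : ∀ i, (z i).1 ∈ stdSimplex ℝ ι := fun i => hTsub (z i).2
  exact ⟨fun i => (z i).1, fun i => ⟨hmem i, hzc i⟩, fun i j =>
    dist_le_of_mem_stdSimplex_of_le (hmem i) (hmem j) (fun k => (hp k).2 _ (hzσ i))
      (fun k => (hp k).2 _ (hzσ j)) hsum⟩

end Simplex

theorem inter_iInter_nonempty_of_cthickening {X ι : Type*} [PseudoEMetricSpace X] {K : Set X}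
    (hK : IsCompact K) {C : ι → Set X} (hC : ∀ i, IsClosed (C i))
    (h : ∀ ε > 0, (K ∩ ⋂ i, Metric.cthickening ε (C i)).Nonempty) : (K ∩ ⋂ i, C i).Nonempty := by
  by_contra! hempty
  have hinter : ⋂ ε : Set.Ioi (0 : ℝ), ⋂ i, Metric.cthickening ε (C i) = ⋂ i, C i := by
    rw [Set.iInter_comm]
    refine Set.iInter_congr fun i => ?_
    rw [Set.iInter_coe_set]
    exact (Metric.closure_eq_iInter_cthickening (C i)).symm.trans (hC i).closure_eq
  obtain ⟨ε, hε⟩ := hK.elim_directed_family_closed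
    (fun ε : Set.Ioi (0 : ℝ) => ⋂ i, Metric.cthickening ε (C i))
    (fun _ => isClosed_iInter fun _ => Metric.isClosed_cthickening) (by rw [hinter, hempty])
    (Monotone.directed_ge fun _ _ hle => Set.iInter_mono fun i => Metric.cthickening_mono hle (C i))
  exact (h ε ε.2).ne_empty hε

theorem exists_pos_mem_of_face_subset {ι : Type*} [Fintype ι] {C : ι → Set (ι → ℝ)}
    (hface : ∀ I : Finset ι, I.Nonempty →
      {m ∈ stdSimplex ℝ ι | ∀ j ∉ I, m j = 0} ⊆ ⋃ i ∈ I, C i) {x : ι → ℝ}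
    (hx : x ∈ stdSimplex ℝ ι) : ∃ i, 0 < x i ∧ x ∈ C i := by
  have hsupport : ({i | 0 < x i} : Finset ι).Nonempty := by
    obtain ⟨i, -, hi⟩ := exists_ne_zero_of_sum_ne_zero (hx.2.trans_ne one_ne_zero)
    exact ⟨i, by simpa using (hx.1 i).lt_of_ne' hi⟩
  have hzero : ∀ j ∉ ({i | 0 < x i} : Finset ι), x j = 0 := fun j hj =>
    le_antisymm (by simpa using hj) (hx.1 j)
  simpa using hface _ hsupport ⟨hx, hzero⟩

theorem kkm_lemma_general {ι : Type*} [Fintype ι] [Nonempty ι] (C : ι → Set (ι → ℝ))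
    (hclosed : ∀ i, IsClosed (C i))
    (hface : ∀ I : Finset ι, I.Nonempty →
      {m ∈ stdSimplex ℝ ι | ∀ j ∉ I, m j = 0} ⊆ ⋃ i ∈ I, C i) :
    (stdSimplex ℝ ι ∩ ⋂ i, C i).Nonempty := by
  choose! c hc using fun x (hx : x ∈ stdSimplex ℝ ι) => exists_pos_mem_of_face_subset hface hx
  refine inter_iInter_nonempty_of_cthickening (isCompact_stdSimplex ℝ ι) hclosed fun ε hε => ?_
  obtain ⟨z, hz, hdist⟩ := exists_dist_le_of_forall_pos (fun x hx => (hc x hx).1) hε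
  have hzC : ∀ i, z i ∈ C i := fun i => by
    simpa only [(hz i).2] using (hc (z i) (hz i).1).2
  let i₀ : ι := Classical.arbitrary ι
  exact ⟨z i₀, (hz i₀).1, Set.mem_iInter.2 fun i =>
    Metric.mem_cthickening_of_dist_le (z i₀) (z i) ε (C i) (hzC i) (hdist i₀ i)⟩

/-- Knaster–Kuratowski–Mazurkiewicz lemma: if the standard `(n-1)`-simplex is
covered by closed sets `C i` such that every face spanned by vertices in a
nonempty set `I` is covered by `⋃ i ∈ I, C i`, then all the `C i` have a common
point. -/
theorem kkm_lemma (n : ℕ) (hn : 0 < n) (C : Fin n → Set (Fin n → ℝ))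
    (hclosed : ∀ i, IsClosed (C i))
    (hface : ∀ I : Finset (Fin n), I.Nonempty →
      {m ∈ stdSimplex ℝ (Fin n) | ∀ j ∉ I, m j = 0} ⊆ ⋃ i ∈ I, C i) :
    (⋂ i, C i).Nonempty :=
  have : Nonempty (Fin n) := ⟨⟨0, hn⟩⟩
  (kkm_lemma_general C hclosed hface).mono Set.inter_subset_right
end

section
/- Let M be the open simplex {m ∈ ℝⁿ : mᵢ > 0, Σmᵢ = 1} and let f : M → ℝⁿ be continuous with fᵢ(m) ≥ 0 and Σᵢ fᵢ(m) = 1 for all m. Define Aᵢ = {m ∈ M_ε : fᵢ(m) ≥ mᵢ} on the restricted simplex M_ε = {m : mᵢ ≥ ε, Σmᵢ = 1} with 0 < ε < 1/n. Suppose that for every subset I, the face of M_ε determined by I (where mⱼ = ε for j ∉ I) is covered by ⋃_{i∈I} Aᵢ. Then there exists m* ∈ M_ε with f(m*) = m*. -/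
open Finset

/-!
Replace each ordered simplex of a chain by the exterior product of the labels of its vertices. Only
rainbow simplices survive, and taking boundaries becomes contraction with the augmentation `δ`.
If `w` is the value of the subdivision of a simplex with a Sperner labelling and `e` is the basis
vector of one of its labels, then `e ∧ w = 0`, since too few labels are available; contracting with
`δ` gives `w = e ∧ δ⌟w`. So `w` is determined by the boundary, and by induction on the dimension it
is unaffected by subdivision. It is therefore nonzero for a rainbow simplex, whose subdivisions
must contain rainbow simplices: this is Sperner's lemma. Compactness turns it into the theorem of
Knaster, Kuratowski and Mazurkiewicz. A common point `m` of the sets `{m | m i ≤ f m i}` is fixed by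
`f` because `m` and `f m` have the same coordinate sum.
-/

open Finsupp (single supported linearCombination)
open CliffordAlgebra (contractLeft)

theorem map_mem_of_mem_supported {α R M : Type*} [Semiring R] [AddCommMonoid M] [Module R M]
    {s : Set α} {W : Submodule R M} {f : (α →₀ R) →ₗ[R] M} (hf : ∀ a ∈ s, f (single a 1) ∈ W)
    {c : α →₀ R} (hc : c ∈ supported R R s) : f c ∈ W := by
  suffices supported R R s ≤ W.comap f from this hc
  rw [Finsupp.supported_eq_span_single, Submodule.span_le, Set.image_subset_iff]
  exact hf

/-- Integral simplicial chains on ordered simplices: the list `[x₀, …, xₖ]` stands for the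
`k`-simplex with these vertices, possibly degenerate, and `[]` for the simplex of dimension `-1`,
so that the complex is the augmented one. -/
abbrev OrderedChain (E : Type*) : Type _ := List E →₀ ℤ

namespace OrderedChain

section Boundary

variable {E : Type*}

/-- The join of a chain with the point `a`, put in front. -/
noncomputable def cone (a : E) : OrderedChain E →ₗ[ℤ] OrderedChain E :=
  Finsupp.lmapDomain ℤ ℤ (List.cons a)

/-- The alternating sum of the facets of an ordered simplex. -/
noncomputable def boundaryList : List E → OrderedChain E
  | [] => 0
  | a :: L => single L 1 - cone a (boundaryList L)

/-- The boundary operator of the augmented complex of ordered chains. -/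
noncomputable def boundary : OrderedChain E →ₗ[ℤ] OrderedChain E :=
  linearCombination ℤ boundaryList

theorem cone_single (a : E) (L : List E) : cone a (single L 1) = single (a :: L) 1 := by
  simp [cone]

theorem boundary_single (L : List E) : boundary (single L 1) = boundaryList L := by
  simp [boundary]

theorem boundary_cone (a : E) (c : OrderedChain E) :
    boundary (cone a c) = c - cone a (boundary c) := by
  suffices boundary ∘ₗ cone a = LinearMap.id - cone a ∘ₗ boundary from LinearMap.congr_fun this c
  ext L : 2
  simp [cone_single, boundary_single, boundaryList]

theorem boundary_boundaryList (L : List E) : boundary (boundaryList L) = 0 := by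
  induction L with
  | nil => exact map_zero _
  | cons a L ih =>
    rw [boundaryList, map_sub, boundary_cone, boundary_single, ih, map_zero, sub_zero, sub_self]

theorem boundaryList_mem_supported (L : List E) :
    boundaryList L ∈ supported ℤ ℤ {K | K.length + 1 = L.length ∧ K ⊆ L} := by
  induction L with
  | nil => exact zero_mem _
  | cons a L ih =>
    refine sub_mem (Finsupp.single_mem_supported ℤ 1 ⟨rfl, List.subset_cons_self a L⟩) ?_
    refine map_mem_of_mem_supported ?_ ih
    rintro K ⟨hlen, hKL⟩
    rw [cone_single]
    exact Finsupp.single_mem_supported ℤ 1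
      ⟨congrArg Nat.succ hlen, List.cons_subset_cons a hKL⟩

end Boundary

section Label

variable {E ι : Type*}

/-- The exterior product of the standard basis vectors indexed by the entries of a list. -/
noncomputable def basisWedge (I : List ι) : ExteriorAlgebra ℤ (ι →₀ ℤ) :=
  (I.map fun i => ExteriorAlgebra.ι ℤ (single i (1 : ℤ))).prod

theorem basisWedge_cons (i : ι) (I : List ι) :
    basisWedge (i :: I) = ExteriorAlgebra.ι ℤ (single i (1 : ℤ)) * basisWedge I := by
  simp [basisWedge]

theorem basisWedge_eq_zero_of_not_nodup {I : List ι} (hI : ¬ I.Nodup) : basisWedge I = 0 := by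
  have hrep : ¬ Function.Injective fun k => single (I.get k) (1 : ℤ) := fun h =>
    hI (List.nodup_iff_injective_get.2 (Function.Injective.of_comp (f := (single · (1 : ℤ))) h))
  rw [← (ExteriorAlgebra.ιMulti ℤ I.length).map_eq_zero_of_not_injective _ hrep,
    ExteriorAlgebra.ιMulti_apply, basisWedge]
  conv_lhs => rw [← List.ofFn_get I, List.map_ofFn]
  rfl

theorem contractLeft_lapply_basisWedge {i : ι} {I : List ι} (hi : i ∉ I) :
    contractLeft (Finsupp.lapply i) (basisWedge I) = 0 := by
  induction I with
  | nil => simp [basisWedge]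
  | cons j I ih =>
    rw [List.mem_cons, not_or] at hi
    obtain ⟨hij, hiI⟩ := hi
    rw [basisWedge_cons, CliffordAlgebra.contractLeft_ι_mul, ih hiI, Finsupp.lapply_apply,
      Finsupp.single_eq_of_ne hij, zero_smul, mul_zero, sub_zero]

theorem basisWedge_ne_zero_of_nodup {I : List ι} (hI : I.Nodup) : basisWedge I ≠ 0 := by
  induction I with
  | nil => simp [basisWedge]
  | cons i I ih =>
    obtain ⟨hi, hI⟩ := List.nodup_cons.1 hI
    intro h
    apply ih hI
    simpa [basisWedge_cons, CliffordAlgebra.contractLeft_ι_mul,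
      contractLeft_lapply_basisWedge hi] using congrArg (contractLeft (Finsupp.lapply i)) h

/-- The linear form taking the value `1` at every standard basis vector. -/
noncomputable def augmentation : (ι →₀ ℤ) →ₗ[ℤ] ℤ :=
  linearCombination ℤ fun _ => 1

/-- The linear map replacing every ordered simplex by the exterior product of the labels of its
vertices. It kills the simplices on which a label is repeated, so it detects rainbow simplices. -/
noncomputable def labelWedge (l : E → ι) : OrderedChain E →ₗ[ℤ] ExteriorAlgebra ℤ (ι →₀ ℤ) :=
  linearCombination ℤ fun L => basisWedge (L.map l)

theorem labelWedge_single (l : E → ι) (L : List E) :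
    labelWedge l (single L 1) = basisWedge (L.map l) := by
  simp [labelWedge]

theorem labelWedge_cone (l : E → ι) (a : E) (c : OrderedChain E) :
    labelWedge l (cone a c) =
      ExteriorAlgebra.ι ℤ (single (l a) (1 : ℤ)) * labelWedge l c := by
  suffices labelWedge l ∘ₗ cone a =
      LinearMap.mulLeft ℤ (ExteriorAlgebra.ι ℤ (single (l a) (1 : ℤ))) ∘ₗ labelWedge l from
    LinearMap.congr_fun this c
  ext L : 2
  simp [cone_single, labelWedge_single, basisWedge_cons]

theorem labelWedge_boundaryList (l : E → ι) (L : List E) :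
    labelWedge l (boundaryList L) =
      contractLeft augmentation (basisWedge (L.map l)) := by
  induction L with
  | nil => simp [boundaryList, basisWedge]
  | cons a L ih =>
    rw [boundaryList, map_sub, labelWedge_single, labelWedge_cone, ih, List.map_cons,
      basisWedge_cons, CliffordAlgebra.contractLeft_ι_mul]
    simp [augmentation]

theorem labelWedge_boundary (l : E → ι) (c : OrderedChain E) :
    labelWedge l (boundary c) = contractLeft augmentation (labelWedge l c) := by
  suffices labelWedge l ∘ₗ boundary = contractLeft augmentation ∘ₗ labelWedge l from
    LinearMap.congr_fun this c
  ext L : 2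
  simp [boundary_single, labelWedge_single, labelWedge_boundaryList]

theorem labelWedge_eq_ι_mul_labelWedge_boundary (l : E → ι) (i : ι) (c : OrderedChain E)
    (h : ExteriorAlgebra.ι ℤ (single i (1 : ℤ)) * labelWedge l c = 0) :
    labelWedge l c = ExteriorAlgebra.ι ℤ (single i (1 : ℤ)) * labelWedge l (boundary c) := by
  have := congrArg (contractLeft augmentation) h
  simp only [CliffordAlgebra.contractLeft_ι_mul, map_zero, sub_eq_zero] at this
  simpa [labelWedge_boundary, augmentation] using this

end Label

section Subdivision

variable {E : Type*} [AddCommGroup E] [Module ℝ E]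

/-- The barycenter of the vertices of an ordered simplex, counted with multiplicity; it is `0` for
the empty simplex. -/
noncomputable def barycenter (L : List E) : E :=
  univ.centerMass (fun _ : Fin L.length => (1 : ℝ)) L.get

theorem barycenter_mem_convexHull {L : List E} (hL : L ≠ []) :
    barycenter L ∈ convexHull ℝ {x | x ∈ L} :=
  univ.centerMass_mem_convexHull (fun _ _ => zero_le_one)
    (by simpa using List.length_pos_iff.2 hL) fun i _ => L.get_mem i

/-- Barycentric subdivision of chains of simplices with `k` vertices. The explicit number of
vertices makes the recursion through the boundary structural. -/
noncomputable def subdivision : ℕ → OrderedChain E →ₗ[ℤ] OrderedChain E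
  | 0 => LinearMap.id
  | k + 1 => linearCombination ℤ fun L => cone (barycenter L) (subdivision k (boundaryList L))

theorem subdivision_succ_single (k : ℕ) (L : List E) :
    subdivision (k + 1) (single L 1) =
      cone (barycenter L) (subdivision k (boundaryList L)) := by
  simp [subdivision]

theorem boundary_subdivision (k : ℕ) (c : OrderedChain E) :
    boundary (subdivision (k + 1) c) = subdivision k (boundary c) := by
  suffices boundary ∘ₗ subdivision (k + 1) = subdivision (E := E) k ∘ₗ boundary from
    LinearMap.congr_fun this c
  ext L : 2
  suffices cone (barycenter L) (boundary (subdivision k (boundaryList L))) = 0 by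
    simp [subdivision_succ_single, boundary_cone, boundary_single, this]
  cases k with
  | zero => simp [subdivision, boundary_boundaryList]
  | succ k => rw [boundary_subdivision k, boundary_boundaryList, map_zero, map_zero]

theorem boundary_subdivision_pow (k N : ℕ) (c : OrderedChain E) :
    boundary ((subdivision (k + 1) ^ N) c) = (subdivision k ^ N) (boundary c) := by
  induction N with
  | zero => rfl
  | succ N ih =>
    rw [pow_succ', pow_succ', Module.End.mul_apply, Module.End.mul_apply, boundary_subdivision, ih]

end Subdivision

section Refinement

variable {E : Type*} [SeminormedAddCommGroup E] [NormedSpace ℝ E]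

theorem dist_barycenter_le {L : List E} {v : E} (hv : v ∈ L) :
    dist (barycenter L) v ≤ (1 - (L.length : ℝ)⁻¹) * Metric.diam {x | x ∈ L} := by
  obtain ⟨i, rfl⟩ := List.get_of_mem hv
  have hpos : 0 < (L.length : ℝ) := by exact_mod_cast List.length_pos_of_mem hv
  have hsub : barycenter L - L.get i =
      (L.length : ℝ)⁻¹ • ∑ j ∈ univ.erase i, (L.get j - L.get i) := by
    rw [sum_erase _ (sub_self _), sum_sub_distrib, smul_sub]
    simp [barycenter, centerMass, ← Nat.cast_smul_eq_nsmul ℝ, smul_smul, hpos.ne']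
  have hdist (j : Fin L.length) : ‖L.get j - L.get i‖ ≤ Metric.diam {x | x ∈ L} := by
    rw [← dist_eq_norm]
    exact Metric.dist_le_diam_of_mem (L.finite_toSet).isBounded (L.get_mem j) (L.get_mem i)
  calc dist (barycenter L) (L.get i)
      = (L.length : ℝ)⁻¹ * ‖∑ j ∈ univ.erase i, (L.get j - L.get i)‖ := by
        rw [dist_eq_norm, hsub, norm_smul, Real.norm_of_nonneg (by positivity)]
    _ ≤ (L.length : ℝ)⁻¹ * ((L.length - 1) * Metric.diam {x | x ∈ L}) := by
        gcongr
        refine (norm_sum_le_of_le _ fun j _ => hdist j).trans_eq ?_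
        rw [sum_const, card_erase_of_mem (mem_univ i), card_univ, Fintype.card_fin,
          nsmul_eq_mul, Nat.cast_pred (by exact_mod_cast hpos)]
    _ = (1 - (L.length : ℝ)⁻¹) * Metric.diam {x | x ∈ L} := by field_simp

/-- The ordered simplices inside the simplex `L` with as many vertices as `L` and diameter at most
`r` times that of `L`. -/
def refinements (r : ℝ) (L : List E) : Set (List E) :=
  {K | K.length = L.length ∧ {x | x ∈ K} ⊆ convexHull ℝ {x | x ∈ L} ∧
    Metric.diam {x | x ∈ K} ≤ r * Metric.diam {x | x ∈ L}}

theorem refinements_trans {r s : ℝ} (hs : 0 ≤ s) {J K L : List E} (hJ : J ∈ refinements s K)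
    (hK : K ∈ refinements r L) : J ∈ refinements (s * r) L := by
  obtain ⟨hJlen, hJhull, hJdiam⟩ := hJ
  obtain ⟨hKlen, hKhull, hKdiam⟩ := hK
  refine ⟨hJlen.trans hKlen, hJhull.trans (convexHull_min hKhull (convex_convexHull ℝ _)), ?_⟩
  rw [mul_assoc]
  exact hJdiam.trans (mul_le_mul_of_nonneg_left hKdiam hs)

theorem barycenter_cons_mem_refinements {r : ℝ} {J K L : List E} (hr : 0 ≤ r)
    (hLr : 1 - (L.length : ℝ)⁻¹ ≤ r) (hJlen : J.length + 1 = L.length) (hJL : J ⊆ L)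
    (hK : K ∈ refinements r J) : barycenter L :: K ∈ refinements r L := by
  obtain ⟨hKlen, hKhull, hKdiam⟩ := hK
  have hbary : barycenter L ∈ convexHull ℝ {x | x ∈ L} :=
    barycenter_mem_convexHull (List.length_pos_iff.1 (by omega))
  have hKL : {x | x ∈ K} ⊆ convexHull ℝ {x | x ∈ L} := hKhull.trans (convexHull_mono hJL)
  have hball : convexHull ℝ {x | x ∈ L} ⊆
      Metric.closedBall (barycenter L) (r * Metric.diam {x | x ∈ L}) := by
    refine convexHull_min (fun v hv => Metric.mem_closedBall'.2 ?_) (convex_closedBall _ _)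
    exact (dist_barycenter_le hv).trans (by gcongr)
  have hKdiam' : Metric.diam {x | x ∈ K} ≤ r * Metric.diam {x | x ∈ L} :=
    hKdiam.trans <| mul_le_mul_of_nonneg_left
      (Metric.diam_mono hJL L.finite_toSet.isBounded) hr
  refine ⟨by simp [hKlen, hJlen], ?_, Metric.diam_le_of_forall_dist_le (by positivity) ?_⟩
  · simpa [Set.subset_def, hbary] using hKL
  · intro x hx y hy
    rcases List.mem_cons.1 hx with rfl | hxK <;> rcases List.mem_cons.1 hy with rfl | hyK
    · rw [dist_self]; positivity
    · exact Metric.mem_closedBall'.1 (hball (hKL hyK))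
    · exact hball (hKL hxK)
    · exact (Metric.dist_le_diam_of_mem K.finite_toSet.isBounded hxK hyK).trans hKdiam'

theorem subdivision_single_mem_supported {k n : ℕ} (hkn : k ≤ n) {L : List E}
    (hL : L.length = k) :
    subdivision k (single L 1) ∈ supported ℤ ℤ (refinements (1 - (n : ℝ)⁻¹) L) := by
  induction k generalizing L with
  | zero =>
    obtain rfl := List.length_eq_zero_iff.1 hL
    exact Finsupp.single_mem_supported ℤ 1 ⟨rfl, subset_convexHull ℝ _, by simp⟩
  | succ k ih =>
    have hr : 0 ≤ 1 - (n : ℝ)⁻¹ := sub_nonneg.2 (Nat.cast_inv_le_one n)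
    have hLr : 1 - (L.length : ℝ)⁻¹ ≤ 1 - (n : ℝ)⁻¹ := by
      rw [hL]
      gcongr
    rw [subdivision_succ_single]
    refine map_mem_of_mem_supported (f := cone (barycenter L) ∘ₗ subdivision k) ?_
      (boundaryList_mem_supported L)
    rintro J ⟨hJlen, hJL⟩
    refine map_mem_of_mem_supported (f := cone (barycenter L)) ?_ (ih (by omega) (by omega))
    intro K hK
    rw [cone_single]
    exact Finsupp.single_mem_supported ℤ 1
      (barycenter_cons_mem_refinements hr hLr hJlen hJL hK)

theorem subdivision_pow_single_mem_supported (L : List E) (N : ℕ) :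
    (subdivision L.length ^ N) (single L 1) ∈
      supported ℤ ℤ (refinements ((1 - (L.length : ℝ)⁻¹) ^ N) L) := by
  induction N with
  | zero => exact Finsupp.single_mem_supported ℤ 1 ⟨rfl, subset_convexHull ℝ _, by simp⟩
  | succ N ih =>
    rw [pow_succ' (subdivision _), Module.End.mul_apply]
    refine map_mem_of_mem_supported ?_ ih
    intro K hK
    refine Finsupp.supported_mono ?_ (subdivision_single_mem_supported le_rfl hK.1)
    intro J hJ
    rw [pow_succ']
    exact refinements_trans (sub_nonneg.2 (Nat.cast_inv_le_one _)) hJ hK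

end Refinement

end OrderedChain

open OrderedChain

section Sperner

variable {E ι : Type*}

/-- Sperner labellings of the simplex with vertex set `V`: on every face, only the labels of the
vertices of that face occur. -/
def IsSpernerLabelling [AddCommGroup E] [Module ℝ E] (V : Set E) (l : E → ι) : Prop :=
  ∀ s ⊆ V, Set.MapsTo l (convexHull ℝ s) (l '' s)

theorem IsSpernerLabelling.mono [AddCommGroup E] [Module ℝ E] {V W : Set E} {l : E → ι}
    (hl : IsSpernerLabelling W l) (hVW : V ⊆ W) : IsSpernerLabelling V l :=
  fun s hs => hl s (hs.trans hVW)

variable [SeminormedAddCommGroup E] [NormedSpace ℝ E]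

theorem IsSpernerLabelling.map_subset_map {l : E → ι} {r : ℝ} {K L : List E}
    (hl : IsSpernerLabelling {x | x ∈ L} l) (hK : K ∈ refinements r L) : K.map l ⊆ L.map l := by
  intro i hi
  obtain ⟨x, hx, rfl⟩ := List.mem_map.1 hi
  exact List.mem_map.2 (hl _ subset_rfl (hK.2.1 hx))

theorem IsSpernerLabelling.ι_mul_labelWedge_subdivision_pow {l : E → ι} {a : E} {L : List E}
    (hl : IsSpernerLabelling {x | x ∈ L} l) (ha : a ∈ L) (N : ℕ) :
    ExteriorAlgebra.ι ℤ (single (l a) (1 : ℤ)) *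
      labelWedge l ((subdivision L.length ^ N) (single L 1)) = 0 := by
  rw [← labelWedge_cone, ← Submodule.mem_bot ℤ]
  refine map_mem_of_mem_supported (f := labelWedge l ∘ₗ cone a) ?_
    (subdivision_pow_single_mem_supported L N)
  intro K hK
  rw [Submodule.mem_bot, LinearMap.comp_apply, cone_single, labelWedge_single]
  apply basisWedge_eq_zero_of_not_nodup
  intro hnodup
  have hsub : (a :: K).map l ⊆ L.map l :=
    List.cons_subset.2 ⟨List.mem_map_of_mem ha, hl.map_subset_map hK⟩
  have := (List.subperm_of_subset hnodup hsub).length_le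
  simp [hK.1] at this

theorem IsSpernerLabelling.labelWedge_subdivision_pow {l : E → ι} {L : List E}
    (hl : IsSpernerLabelling {x | x ∈ L} l) (N : ℕ) :
    labelWedge l ((subdivision L.length ^ N) (single L 1)) = basisWedge (L.map l) := by
  rw [← labelWedge_single]
  induction hk : L.length generalizing L with
  | zero => rw [show (subdivision 0 : OrderedChain E →ₗ[ℤ] _) = 1 from rfl, one_pow]; rfl
  | succ k ih =>
    obtain ⟨a, ha⟩ := List.exists_mem_of_length_pos (l := L) (by omega)
    have cone_boundary (M : ℕ) : labelWedge l ((subdivision (k + 1) ^ M) (single L 1)) =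
        ExteriorAlgebra.ι ℤ (single (l a) (1 : ℤ)) *
          labelWedge l ((subdivision k ^ M) (boundaryList L)) := by
      rw [← boundary_single, ← boundary_subdivision_pow]
      exact labelWedge_eq_ι_mul_labelWedge_boundary l _ _
        (hk ▸ hl.ι_mul_labelWedge_subdivision_pow ha M)
    have facets : labelWedge l ((subdivision k ^ N) (boundaryList L)) =
        labelWedge l (boundaryList L) := by
      rw [← sub_eq_zero, ← Submodule.mem_bot ℤ]
      refine map_mem_of_mem_supported (f := labelWedge l ∘ₗ (subdivision k ^ N) - labelWedge l) ?_
        (boundaryList_mem_supported L)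
      rintro J ⟨hJlen, hJL⟩
      exact sub_eq_zero.2 (ih (hl.mono hJL) (by omega))
    rw [cone_boundary, facets]
    exact (cone_boundary 0).symm

theorem IsSpernerLabelling.exists_rainbow_refinement {l : E → ι} {L : List E}
    (hl : IsSpernerLabelling {x | x ∈ L} l) (hL : (L.map l).Nodup) (N : ℕ) :
    ∃ K ∈ refinements ((1 - (L.length : ℝ)⁻¹) ^ N) L, (K.map l).Perm (L.map l) := by
  by_contra! h
  refine basisWedge_ne_zero_of_nodup hL ?_
  rw [← hl.labelWedge_subdivision_pow N, ← Submodule.mem_bot ℤ]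
  refine map_mem_of_mem_supported ?_ (subdivision_pow_single_mem_supported L N)
  intro K hK
  rw [Submodule.mem_bot, labelWedge_single]
  apply basisWedge_eq_zero_of_not_nodup
  intro hnodup
  refine h K hK ((List.subperm_of_subset hnodup (hl.map_subset_map hK)).perm_of_length_le ?_)
  simp [hK.1]

theorem IsSpernerLabelling.exists_small_rainbow [Finite ι] {v : ι → E} {l : E → ι}
    (hl : IsSpernerLabelling (Set.range v) l) (hv : ∀ i, l (v i) = i) {ε : ℝ} (hε : 0 < ε) :
    ∃ x : ι → E, (∀ i, x i ∈ convexHull ℝ (Set.range v)) ∧ (∀ i, l (x i) = i) ∧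
      ∀ i j, dist (x i) (x j) < ε := by
  have := Fintype.ofFinite ι
  let L : List E := univ.toList.map v
  have hLrange : {x | x ∈ L} = Set.range v := by ext; simp [L]
  have hLlabels : L.map l = univ.toList := by simp [L, Function.comp_def, hv]
  rw [← hLrange] at hl ⊢
  have hpos : 0 ≤ 1 - (L.length : ℝ)⁻¹ := sub_nonneg.2 (Nat.cast_inv_le_one _)
  have hlt : 1 - (L.length : ℝ)⁻¹ < 1 := by
    have : Nonempty ι := ⟨l 0⟩
    exact sub_lt_self 1 (inv_pos.2 (by simp [L, Fintype.card_pos]))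
  have hlim := (tendsto_pow_atTop_nhds_zero_of_lt_one hpos hlt).mul_const
    (Metric.diam {x | x ∈ L})
  rw [zero_mul] at hlim
  obtain ⟨N, hN⟩ := (hlim.eventually_lt_const hε).exists
  obtain ⟨K, ⟨-, hKL, hKdiam⟩, hperm⟩ :=
    hl.exists_rainbow_refinement (hLlabels ▸ univ.nodup_toList) N
  have hlabels (i : ι) : ∃ x ∈ K, l x = i := by
    rw [← List.mem_map, hperm.mem_iff, hLlabels]
    simp
  choose x hxK hx using hlabels
  exact ⟨x, fun i => hKL (hxK i), hx, fun i j =>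
    (Metric.dist_le_diam_of_mem K.finite_toSet.isBounded (hxK i) (hxK j)).trans_lt
      (hKdiam.trans_lt hN)⟩

end Sperner

theorem exists_mem_forall_mem_of_forall_dist_lt {X ι : Type*} [PseudoMetricSpace X] [Nonempty ι]
    {C : Set X} {F : ι → Set X} (hC : IsCompact C) (hF : ∀ i, IsClosed (F i))
    (h : ∀ ε > 0, ∃ x : ι → X, ∀ i, x i ∈ C ∩ F i ∧ ∀ j, dist (x i) (x j) < ε) :
    ∃ m ∈ C, ∀ i, m ∈ F i := by
  obtain ⟨i₀⟩ := ‹Nonempty ι›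
  choose x hx using fun N : ℕ => h _ (Nat.one_div_pos_of_nat (α := ℝ) (n := N))
  obtain ⟨m, hm, φ, hφ, hlim⟩ := hC.tendsto_subseq fun N => (hx N i₀).1.1
  refine ⟨m, hm, fun i => ?_⟩
  have hdist : Filter.Tendsto (fun N => dist (x (φ N) i₀) (x (φ N) i)) Filter.atTop (nhds 0) :=
    squeeze_zero (fun _ => dist_nonneg) (fun N => ((hx _ i₀).2 i).le)
      (tendsto_one_div_add_atTop_nhds_zero_nat.comp hφ.tendsto_atTop)
  exact (hF i).mem_of_tendsto ((tendsto_iff_of_dist hdist).1 hlim)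
    (Filter.Eventually.of_forall fun N => (hx (φ N) i).1.2)

section KKM

variable {E ι : Type*}

theorem mem_convexHull_image_support [Fintype ι] [AddCommGroup E] [Module ℝ E] (v : ι → E)
    {x : ι → ℝ} (hx : x ∈ stdSimplex ℝ ι) :
    Fintype.linearCombination ℝ v x ∈ convexHull ℝ (v '' x.support) := by
  classical
  rw [Fintype.linearCombination_apply, ← sum_filter_of_ne (p := (· ∈ x.support)) (by aesop)]
  refine (convex_convexHull ℝ _).sum_mem (fun i _ => hx.1 i) ?_ fun i hi =>
    subset_convexHull ℝ _ ⟨i, (mem_filter.1 hi).2, rfl⟩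
  rw [sum_filter_of_ne (by simp), hx.2]

theorem isSpernerLabelling_of_mem_support [Fintype ι] [DecidableEq ι] {l : (ι → ℝ) → ι}
    (hl : ∀ x ∈ stdSimplex ℝ ι, l x ∈ x.support) :
    IsSpernerLabelling (Set.range fun i : ι => Pi.single i (1 : ℝ)) l := by
  intro s hs x hx
  have hsimplex : s ⊆ stdSimplex ℝ ι :=
    hs.trans (Set.range_subset_iff.2 (single_mem_stdSimplex ℝ))
  have hlx : x (l x) ≠ 0 := hl x (convexHull_min hsimplex (convex_stdSimplex ℝ ι) hx)
  obtain ⟨y, hy, hyl⟩ : ∃ y ∈ s, y (l x) ≠ 0 := by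
    by_contra! h
    exact hlx (convexHull_min h
      (convex_hyperplane (LinearMap.proj (R := ℝ) (φ := fun _ : ι => ℝ) (l x)).isLinear 0) hx)
  obtain ⟨j, rfl⟩ := hs hy
  have eq_of_single_ne_zero {i : ι} (h : Pi.single (M := fun _ => ℝ) j 1 i ≠ 0) : i = j := by
    by_contra hij
    exact h (Pi.single_eq_of_ne hij 1)
  exact ⟨_, hy, (eq_of_single_ne_zero (hl _ (hsimplex hy))).trans (eq_of_single_ne_zero hyl).symm⟩

theorem knaster_kuratowski_mazurkiewicz [Finite ι] [Nonempty ι] [AddCommGroup E] [Module ℝ E]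
    [TopologicalSpace E] [ContinuousAdd E] [ContinuousSMul ℝ E] (v : ι → E) {F : ι → Set E}
    (hF : ∀ i, IsClosed (F i))
    (hcover : ∀ s : Finset ι, convexHull ℝ (v '' s) ⊆ ⋃ i ∈ s, F i) :
    ∃ x ∈ convexHull ℝ (Set.range v), ∀ i, x ∈ F i := by
  classical
  have := Fintype.ofFinite ι
  let p : (ι → ℝ) →ₗ[ℝ] E := Fintype.linearCombination ℝ v
  have hp : Continuous p := by
    change Continuous fun x : ι → ℝ => ∑ i, x i • v i
    fun_prop
  have hlabel (x : ι → ℝ) : ∃ i, x ∈ stdSimplex ℝ ι → i ∈ x.support ∧ p x ∈ F i := by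
    by_cases hx : x ∈ stdSimplex ℝ ι
    · have := hcover x.support.toFinset (by simpa using mem_convexHull_image_support v hx)
      simp only [Set.mem_iUnion, Set.mem_toFinset, exists_prop] at this
      exact this.imp fun i hi _ => hi
    · exact ⟨Classical.arbitrary ι, fun h => absurd h hx⟩
  choose l hl using hlabel
  have hsperner := isSpernerLabelling_of_mem_support fun x hx => (hl x hx).1
  have hvertex (i : ι) : l (Pi.single i 1) = i := by
    by_contra h
    exact (hl _ (single_mem_stdSimplex ℝ i)).1 (Pi.single_eq_of_ne h 1)
  obtain ⟨m, hm, hmF⟩ := exists_mem_forall_mem_of_forall_dist_lt (F := fun i => p ⁻¹' F i)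
    (isCompact_stdSimplex ℝ ι) (fun i => (hF i).preimage hp) fun ε hε => by
      obtain ⟨x, hx, hlx, hdist⟩ := hsperner.exists_small_rainbow hvertex hε
      rw [convexHull_rangle_single_eq_stdSimplex] at hx
      have hxF (i : ι) : p (x i) ∈ F i := by simpa only [hlx] using (hl _ (hx i)).2
      exact ⟨x, fun i => ⟨⟨hx i, hxF i⟩, hdist i⟩⟩
  exact ⟨p m, convexHull_mono (Set.image_subset_range _ _) (mem_convexHull_image_support v hm),
    hmF⟩

end KKM

section RestrictedSimplex

variable {ι : Type*} [Fintype ι] {ε : ℝ}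

/-- The `ε`-restricted simplex `M_ε`. The parameter is an arbitrary real number: this is the unit
simplex for `ε = 0` and contains it for `ε < 0`. -/
def restrictedSimplex (ι : Type*) [Fintype ι] (ε : ℝ) : Set (ι → ℝ) :=
  {m | (∀ i, ε ≤ m i) ∧ ∑ i, m i = 1}

theorem isClosed_restrictedSimplex : IsClosed (restrictedSimplex ι ε) :=
  (isClosed_Ici (a := fun _ : ι => ε)).inter (isClosed_eq (by fun_prop) continuous_const)

theorem convex_restrictedSimplex : Convex ℝ (restrictedSimplex ι ε) := by
  refine Convex.inter (convex_Ici (fun _ : ι => ε)) ?_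
  exact convex_hyperplane (f := fun m : ι → ℝ => ∑ i, m i)
    ⟨fun x y => sum_add_distrib, fun c x => (mul_sum _ _ _).symm⟩ 1

theorem convex_restrictedSimplex_face (s : Finset ι) :
    Convex ℝ {m ∈ restrictedSimplex ι ε | ∀ j ∉ s, m j = ε} :=
  convex_restrictedSimplex.inter
    (convex_pi (s := (s : Set ι)ᶜ) (t := fun _ => {ε}) fun _ _ => convex_singleton ε)

/-- The vertex of the `ε`-restricted simplex at which all coordinates but the `i`-th are `ε`. -/
noncomputable def restrictedVertex [DecidableEq ι] (ε : ℝ) (i : ι) : ι → ℝ :=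
  fun j => ε + (1 - Fintype.card ι * ε) * Pi.single (M := fun _ => ℝ) i 1 j

theorem restrictedVertex_mem_face [DecidableEq ι] (hε : Fintype.card ι * ε ≤ 1) {s : Finset ι}
    {i : ι} (hi : i ∈ s) :
    restrictedVertex ε i ∈ {m ∈ restrictedSimplex ι ε | ∀ j ∉ s, m j = ε} := by
  refine ⟨⟨fun j => ?_, ?_⟩, fun j hj => ?_⟩
  · exact le_add_of_nonneg_right
      (mul_nonneg (sub_nonneg.2 hε) ((single_mem_stdSimplex ℝ i).1 j))
  · simp [restrictedVertex, sum_add_distrib, ← mul_sum]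
  · rw [restrictedVertex, Pi.single_eq_of_ne (ne_of_mem_of_not_mem hi hj).symm, mul_zero, add_zero]

theorem fixed_point_on_restricted_simplex_general [Nonempty ι] (hε : Fintype.card ι * ε ≤ 1)
    {f : (ι → ℝ) → ι → ℝ}
    (hclosed : ∀ i, IsClosed {m ∈ restrictedSimplex ι ε | m i ≤ f m i})
    (hsum : ∀ m ∈ restrictedSimplex ι ε, ∑ i, f m i = 1)
    (hface : ∀ s : Finset ι, s.Nonempty → {m ∈ restrictedSimplex ι ε | ∀ j ∉ s, m j = ε} ⊆
      ⋃ i ∈ s, {m ∈ restrictedSimplex ι ε | m i ≤ f m i}) :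
    ∃ m ∈ restrictedSimplex ι ε, f m = m := by
  classical
  have hcover (s : Finset ι) : convexHull ℝ (restrictedVertex ε '' s) ⊆
      ⋃ i ∈ s, {m ∈ restrictedSimplex ι ε | m i ≤ f m i} := by
    rcases s.eq_empty_or_nonempty with rfl | hs
    · simp
    · refine (convexHull_min ?_ (convex_restrictedSimplex_face s)).trans (hface s hs)
      exact Set.image_subset_iff.2 fun i hi => restrictedVertex_mem_face hε hi
  obtain ⟨m, -, hm⟩ := knaster_kuratowski_mazurkiewicz (restrictedVertex ε) hclosed hcover
  have hmem : m ∈ restrictedSimplex ι ε := (hm (Classical.arbitrary ι)).1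
  have hle : ∀ i ∈ univ, m i ≤ f m i := fun i _ => (hm i).2
  have heq := (sum_eq_sum_iff_of_le hle).1 (hmem.2.trans (hsum m hmem).symm)
  exact ⟨m, hmem, funext fun i => (heq i (mem_univ i)).symm⟩

end RestrictedSimplex

/-- Abstract fixed-point step via KKM on the `ε`-restricted simplex: if `f` is
continuous on `Mε`, maps into the unit simplex, and the sets
`A i = {m ∈ Mε : f m i ≥ m i}` satisfy the KKM face-covering condition on `Mε`
(faces where `m j = ε` for `j ∉ I` are covered by `⋃ i ∈ I, A i`), then `f`
has a fixed point in `Mε`. -/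
theorem fixed_point_on_restricted_simplex (n : ℕ) (hn : 1 ≤ n) (ε : ℝ)
    (hε : 0 < ε) (hεn : ε < 1 / n)
    (f : (Fin n → ℝ) → (Fin n → ℝ))
    (Mε : Set (Fin n → ℝ))
    (hMε : Mε = {m : Fin n → ℝ | (∀ i, ε ≤ m i) ∧ ∑ i, m i = 1})
    (hf_cont : ContinuousOn f Mε)
    (hf_simplex : ∀ m ∈ Mε, (∀ i, 0 ≤ f m i) ∧ ∑ i, f m i = 1)
    (hface : ∀ I : Finset (Fin n), I.Nonempty →
      {m ∈ Mε | ∀ j ∉ I, m j = ε} ⊆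
        ⋃ i ∈ I, {m ∈ Mε | m i ≤ f m i}) :
    ∃ m ∈ Mε, f m = m := by
  subst hMε
  have : NeZero n := ⟨by omega⟩
  have hcard : (Fintype.card (Fin n) : ℝ) * ε ≤ 1 := by
    rw [Fintype.card_fin, mul_comm]
    exact ((lt_div_iff₀ (by exact_mod_cast hn)).1 hεn).le
  refine fixed_point_on_restricted_simplex_general hcard (fun i => ?_)
    (fun m hm => (hf_simplex m hm).2) hface
  exact isClosed_restrictedSimplex.isClosed_le (continuous_apply i).continuousOn
    (continuousOn_pi.1 hf_cont i)
end

section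
/- Let (X, μ) be a finite nonzero measure space, n ≥ 2, and M = {m ∈ ℝⁿ : mᵢ > 0, Σmᵢ = 1}. Let c : Fin n → X → M → ℝ satisfy: (i) continuity of cᵢ(x,·) in m for each x and measurability in x for each m; (ii) for each i ≠ j and m ∈ M, μ({x : cᵢ(x,m) = cⱼ(x,m)}) = 0; (iii) for every δ > 0, sup over {x, m : mᵢ ≥ δ} of cᵢ(x,m) is finite; (iv) cᵢ(x,m) → +∞ uniformly in x as mᵢ → 0. Then there exists m* ∈ M and a measurable partition assignment I : X → Fin n with μ({x : I(x) = i}) = m*ᵢ · μ(X) for all i (normalizing μ(X)=1), cᵢ(x, m*) = min_j cⱼ(x, m*) for a.e. x with I(x) = i, and m*ᵢ > 0 for every i. -/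
open MeasureTheory

/-!
Let every agent choose a cheapest community. Since ties are null, the measure of the agents choosing
community `i` is a continuous function of the sizes, and a community that is too small attracts
nobody. Composing with a contraction of the closed simplex into the open one, on whose faces one
community is that small, turns this into the boundary condition of a coincidence theorem on the
simplex, which yields sizes equal to the measures they induce.

The coincidence theorem follows from the Knaster–Kuratowski–Mazurkiewicz lemma, and the latter from
Scarf's theorem on dominating sets, applied to the coordinates as rankings of a finite net in the
simplex. Scarf's parity argument is Sperner's, with dominating sets in place of a triangulation.
-/

section Counting

open Finset

variable {V W : Type*} [DecidableEq V]

theorem image_erase_eq_of_ne_of_eq [DecidableEq W] {f : V → W} {s : Finset V} {x y : V}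
    (hy : y ∈ s) (hne : x ≠ y) (hxy : f x = f y) : (s.erase x).image f = s.image f := by
  refine (image_subset_image (erase_subset x s)).antisymm fun w hw => ?_
  obtain ⟨z, hz, rfl⟩ := mem_image.1 hw
  rcases eq_or_ne z x with rfl | hzx
  · exact hxy ▸ mem_image_of_mem f (mem_erase.2 ⟨hne.symm, hy⟩)
  · exact mem_image_of_mem f (mem_erase.2 ⟨hzx, hz⟩)

theorem card_filter_image_erase_eq_two [DecidableEq W] {f : V → W} {s : Finset V} {t : Finset W}
    (himage : s.image f = t) (hcard : #t + 1 = #s) :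
    #{x ∈ s | (s.erase x).image f = t} = 2 := by
  obtain ⟨a, ha, b, hb, hab, hfab⟩ := exists_ne_map_eq_of_card_lt_of_maps_to
    (by omega : #t < #s) (f := f) fun x hx => himage ▸ mem_image_of_mem f hx
  refine card_eq_two.2 ⟨a, b, hab, Subset.antisymm (fun x hx => ?_) ?_⟩
  · obtain ⟨hxs, hx⟩ := mem_filter.1 hx
    have injOn_erase : Set.InjOn f (s.erase x) := by
      rw [← card_image_iff, hx, card_erase_of_mem hxs]
      omega
    by_contra! h
    simp only [mem_insert, mem_singleton, not_or] at h
    exact hab (injOn_erase (mem_erase.2 ⟨Ne.symm h.1, ha⟩) (mem_erase.2 ⟨Ne.symm h.2, hb⟩) hfab)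
  · simp only [insert_subset_iff, singleton_subset_iff, mem_filter]
    exact ⟨⟨ha, himage ▸ image_erase_eq_of_ne_of_eq hb hab hfab⟩,
      ⟨hb, himage ▸ image_erase_eq_of_ne_of_eq ha hab.symm hfab.symm⟩⟩

theorem even_card_filter_image_erase_eq_erase [Fintype W] [DecidableEq W] {f : V → W}
    {s : Finset V} (hcard : #s = Fintype.card W) (himage : s.image f ≠ univ) (w : W) :
    Even #{x ∈ s | (s.erase x).image f = univ.erase w} := by
  obtain h | ⟨x, hx⟩ := ({x ∈ s | (s.erase x).image f = univ.erase w}).eq_empty_or_nonempty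
  · rw [h, card_empty]
    exact .zero
  have erase_subset_image : univ.erase w ⊆ s.image f :=
    (mem_filter.1 hx).2 ▸ image_subset_image (erase_subset x s)
  have notMem_image : w ∉ s.image f := fun hw => himage <| univ_subset_iff.1 <|
    insert_erase (mem_univ w) ▸ insert_subset hw erase_subset_image
  have image_eq : s.image f = univ.erase w :=
    Subset.antisymm (subset_erase.2 ⟨subset_univ _, notMem_image⟩) erase_subset_image
  rw [card_filter_image_erase_eq_two image_eq
    (by rw [card_erase_add_one (mem_univ w), card_univ, hcard])]
  exact even_two

theorem sum_card_filter_erase_mem_eq_sum_card_filter_insert_mem [Fintype V]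
    (𝒜 ℬ : Finset (Finset V)) :
    ∑ s ∈ 𝒜, #{x ∈ s | s.erase x ∈ ℬ} = ∑ t ∈ ℬ, #{x | x ∉ t ∧ insert x t ∈ 𝒜} := by
  rw [← card_sigma, ← card_sigma]
  refine card_nbij' (fun p => ⟨p.1.erase p.2, p.2⟩) (fun p => ⟨insert p.2 p.1, p.2⟩)
    ?_ ?_ ?_ ?_ <;>
  · rintro ⟨s, x⟩ h
    simp only [mem_coe, mem_sigma, mem_filter] at h
    simp [h]

theorem exists_odd_card_filter_erase_mem [Fintype V] {𝒜 ℬ : Finset (Finset V)} {t₀ : Finset V}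
    (ht₀ : t₀ ∈ ℬ) (hodd : Odd #{x | x ∉ t₀ ∧ insert x t₀ ∈ 𝒜})
    (heven : ∀ t ∈ ℬ, t ≠ t₀ → Even #{x | x ∉ t ∧ insert x t ∈ 𝒜}) :
    ∃ s ∈ 𝒜, Odd #{x ∈ s | s.erase x ∈ ℬ} := by
  by_contra! h
  have even_incidences := even_sum _ fun s hs => Nat.not_odd_iff_even.1 (h s hs)
  rw [sum_card_filter_erase_mem_eq_sum_card_filter_insert_mem,
    ← add_sum_erase _ _ ht₀] at even_incidences
  refine Nat.not_even_iff_odd.2 (hodd.add_even (even_sum _ fun t ht => ?_)) even_incidences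
  exact heven t (mem_of_mem_erase ht) (ne_of_mem_erase ht)

end Counting

section Dominating

open Finset

variable {V ι α : Type*} [LinearOrder α] {r : ι → V → α} {S : Finset V} {f : ι → V} {k : ι} {x : V}

/-- Scarf's dominating sets for a family of rankings `r`: every element is, in some ranking, below
the whole set. They play the role of the simplices of a triangulation. -/
def IsDominating (r : ι → V → α) (S : Finset V) : Prop :=
  ∀ y, ∃ i, ∀ x ∈ S, r i y ≤ r i x

/-- `f` selects an `r i`-least element of `S` for each ranking `r i`. -/
def IsArgmin (r : ι → V → α) (S : Finset V) (f : ι → V) : Prop :=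
  ∀ i, f i ∈ S ∧ ∀ x ∈ S, r i (f i) ≤ r i x

/-- The elements strictly above `f j` in every ranking `r j` with `j ≠ k`. When `f` selects minima
of a dominating set, these are the candidates for replacing `f k`. -/
def upperRegion (r : ι → V → α) (f : ι → V) (k : ι) : Set V :=
  {x | ∀ j ≠ k, r j (f j) < r j x}

theorem IsDominating.mono {T : Finset V} (hT : IsDominating r T) (h : S ⊆ T) :
    IsDominating r S :=
  fun y => (hT y).imp fun _ hi x hx => hi x (h hx)

theorem exists_isArgmin (r : ι → V → α) (hS : S.Nonempty) : ∃ f, IsArgmin r S f := by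
  choose f hf using fun i => S.exists_min_image (r i) hS
  exact ⟨f, hf⟩

theorem IsArgmin.eq_of_forall_le (hf : IsArgmin r S f) {i : ι} (hr : Function.Injective (r i))
    (hx : x ∈ S) (hmin : ∀ y ∈ S, r i x ≤ r i y) : f i = x :=
  hr (((hf i).2 x hx).antisymm (hmin _ (hf i).1))

theorem IsArgmin.image_univ_eq [Fintype ι] [DecidableEq V] (hf : IsArgmin r S f)
    (hr : ∀ i, Function.Injective (r i)) (hS : IsDominating r S) : univ.image f = S := by
  refine (image_subset_iff.2 fun i _ => (hf i).1).antisymm fun x hx => ?_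
  obtain ⟨i, hi⟩ := hS x
  exact mem_image.2 ⟨i, mem_univ i, hf.eq_of_forall_le (hr i) hx hi⟩

theorem IsDominating.disjoint_upperRegion (hS : IsDominating r S) (hf : IsArgmin r S f) {l : ι}
    (hkl : k ≠ l) : Disjoint (upperRegion r f k) (upperRegion r f l) := by
  refine Set.disjoint_left.2 fun x hk hl => ?_
  obtain ⟨i, hi⟩ := hS x
  have hle := hi _ (hf i).1
  rcases eq_or_ne i k with rfl | hik
  · exact (hl i hkl).not_ge hle
  · exact (hk i hik).not_ge hle

theorem notMem_of_mem_upperRegion [Fintype ι] [DecidableEq ι] [DecidableEq V]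
    (himage : (univ.erase k).image f = S) (hx : x ∈ upperRegion r f k) : x ∉ S := by
  intro hxS
  obtain ⟨j, hj, rfl⟩ := mem_image.1 (himage ▸ hxS)
  exact (hx j (ne_of_mem_erase hj)).false

theorem IsDominating.insert_of_isMaxOn [DecidableEq V] (hS : IsDominating r S)
    (hf : IsArgmin r S f) (hx : x ∈ upperRegion r f k)
    (hmax : IsMaxOn (r k) (upperRegion r f k) x) :
    IsDominating r (insert x S) := by
  intro y
  by_cases hy : y ∈ upperRegion r f k
  · obtain ⟨i, hi⟩ := hS y
    obtain rfl : i = k := not_imp_comm.1 (hy i) (hi _ (hf i).1).not_gt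
    exact ⟨i, forall_mem_insert .. |>.2 ⟨hmax hy, hi⟩⟩
  · obtain ⟨j, hj, hyj⟩ : ∃ j ≠ k, r j y ≤ r j (f j) := by simpa [upperRegion] using hy
    exact ⟨j, forall_mem_insert .. |>.2
      ⟨hyj.trans (hx j hj).le, fun z hz => hyj.trans ((hf j).2 z hz)⟩⟩

theorem IsDominating.exists_isMaxOn_of_insert [Fintype ι] [DecidableEq ι] [DecidableEq V]
    (hr : ∀ i, Function.Injective (r i)) (hcard : #S + 1 = Fintype.card ι)
    (hf : IsArgmin r S f) (hxS : x ∉ S) (hx : IsDominating r (insert x S)) :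
    ∃ k, (univ.erase k).image f = S ∧ x ∈ upperRegion r f k ∧
      IsMaxOn (r k) (upperRegion r f k) x := by
  have ne_of_mem : ∀ i, ∀ s ∈ S, r i x ≠ r i s := fun i s hs h => hxS (hr i h ▸ hs)
  obtain ⟨k, hk⟩ := hx x
  have lt_of_mem : ∀ s ∈ S, r k x < r k s := fun s hs =>
    (hk s (mem_insert_of_mem hs)).lt_of_ne (ne_of_mem k s hs)
  -- An element of `S` is least in some ranking of the enlarged set, which cannot be `r k`.
  have exists_lt : ∀ s ∈ S, ∃ j ≠ k, f j = s ∧ r j s < r j x := by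
    intro s hs
    obtain ⟨j, hj⟩ := hx s
    have hle := hj x (mem_insert_self x S)
    refine ⟨j, ?_, hf.eq_of_forall_le (hr j) hs fun y hy => hj y (mem_insert_of_mem hy),
      hle.lt_of_ne (ne_of_mem j s hs).symm⟩
    rintro rfl
    exact (lt_of_mem s hs).not_ge hle
  have himage : (univ.erase k).image f = S := by
    refine (image_subset_iff.2 fun i _ => (hf i).1).antisymm fun s hs => ?_
    obtain ⟨j, hjk, hjs, -⟩ := exists_lt s hs
    exact mem_image.2 ⟨j, mem_erase.2 ⟨hjk, mem_univ j⟩, hjs⟩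
  have injOn_erase : Set.InjOn f (univ.erase k : Finset ι) := by
    rw [← card_image_iff, himage, card_erase_of_mem (mem_univ k), card_univ]
    omega
  refine ⟨k, himage, fun j hj => ?_, fun y hy => ?_⟩
  · obtain ⟨l, hlk, hlj, hlt⟩ := exists_lt (f j) (hf j).1
    obtain rfl : l = j := injOn_erase (by simpa using hlk) (by simpa using hj) hlj
    exact hlt
  · obtain ⟨l, hl⟩ := hx y
    obtain rfl : l = k :=
      not_imp_comm.1 (hy l) (hl _ (mem_insert_of_mem (hf l).1)).not_gt
    exact hl x (mem_insert_self x S)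

open scoped Classical in
theorem IsDominating.card_filter_insert_eq_two [Fintype ι] [Fintype V] [DecidableEq V]
    (hr : ∀ i, Function.Injective (r i)) (hcard : #S + 1 = Fintype.card ι)
    (hS : IsDominating r S) (hf : IsArgmin r S f)
    (hne : ∀ k, (upperRegion r f k).Nonempty) :
    #{x | x ∉ S ∧ IsDominating r (insert x S)} = 2 := by
  choose g hg hmax using fun k =>
    Set.exists_max_image (upperRegion r f k) (r k) (Set.toFinite _) (hne k)
  rw [← card_filter_image_erase_eq_two (hf.image_univ_eq hr hS) (by rw [hcard, card_univ])]
  symm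
  refine card_nbij g (fun k hk => ?_) (fun k _ l _ hkl => ?_) fun x hx => ?_
  · have himage := (mem_filter.1 hk).2
    exact mem_filter.2 ⟨mem_univ _, notMem_of_mem_upperRegion himage (hg k),
      hS.insert_of_isMaxOn hf (hg k) (hmax k)⟩
  · by_contra hne
    exact Set.disjoint_left.1 (hS.disjoint_upperRegion hf hne) (hg k) (hkl ▸ hg l)
  · obtain ⟨-, hxS, hdom⟩ := mem_filter.1 hx
    obtain ⟨k, himage, hk, hxmax⟩ := hdom.exists_isMaxOn_of_insert hr hcard hf hxS
    exact ⟨k, mem_filter.2 ⟨mem_univ k, himage⟩, hr k ((hxmax (hg k)).antisymm (hmax k x hk))⟩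

end Dominating

section Scarf

open Finset

variable {T ι α : Type*} [DecidableEq ι]

theorem eq_image_inr_of_forall_inl_notMem [DecidableEq T] {c : T → ι}
    {S : Finset (T ⊕ ι)} {C : Finset ι} (hS : ∀ t, .inl t ∉ S)
    (himage : S.image (Sum.elim c id) = C) : S = C.image .inr := by
  ext (t | j) <;> simp [← himage, hS]

/-- The value of a point or slack element before ties are broken. The slack element `inr i` lies
below all points in the ranking `r i` and above them in the others. -/
def slackLevel (r : ι → T → α) (i : ι) : T ⊕ ι → WithBot (WithTop α) :=
  Sum.elim (fun t => (r i t : WithTop α)) fun j => if j = i then ⊥ else (⊤ : WithTop α)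

/-- Scarf's extension of the rankings `r` of `T` to rankings of `T ⊕ ι` without ties, in which each
ranking has its own slack element: ties of `slackLevel` are broken by an arbitrary enumeration. -/
noncomputable def slackRank [Fintype T] [Fintype ι] (r : ι → T → α) (i : ι) (v : T ⊕ ι) :
    WithBot (WithTop α) ×ₗ Fin (Fintype.card (T ⊕ ι)) :=
  toLex (slackLevel r i v, Fintype.equivFin _ v)

variable [Fintype T] [Fintype ι]

theorem slackRank_injective (r : ι → T → α) (i : ι) : Function.Injective (slackRank r i) :=
  fun _ _ h => (Fintype.equivFin _).injective (congrArg (fun p => (ofLex p).2) h)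

variable [LinearOrder α] {r : ι → T → α} {i j : ι} {t u : T}

theorem slackRank_lt_of_slackLevel_lt {v w : T ⊕ ι} (h : slackLevel r i v < slackLevel r i w) :
    slackRank r i v < slackRank r i w :=
  Prod.Lex.toLex_lt_toLex.2 (.inl h)

theorem slackRank_inr_self_lt_inl : slackRank r i (.inr i) < slackRank r i (.inl t) :=
  slackRank_lt_of_slackLevel_lt (by simp [slackLevel])

theorem slackRank_inr_self_le (v : T ⊕ ι) : slackRank r i (.inr i) ≤ slackRank r i v := by
  rcases eq_or_ne v (.inr i) with rfl | hv
  · exact le_rfl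
  · refine (slackRank_lt_of_slackLevel_lt ?_).le
    rcases v with t | j
    · simp [slackLevel]
    · simp [slackLevel, show j ≠ i by simpa using hv]

theorem slackRank_inl_lt_inr (h : j ≠ i) : slackRank r i (.inl t) < slackRank r i (.inr j) :=
  slackRank_lt_of_slackLevel_lt <| by
    simpa [slackLevel, h] using WithBot.coe_lt_coe.2 (WithTop.coe_lt_top (r i t))

theorem le_of_slackRank_inl_le (h : slackRank r i (.inl t) ≤ slackRank r i (.inl u)) :
    r i t ≤ r i u := by
  contrapose! h
  exact slackRank_lt_of_slackLevel_lt (by simpa [slackLevel] using h)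

open scoped Classical in
theorem even_card_filter_insert_of_inl_mem [DecidableEq T] {S : Finset (T ⊕ ι)}
    (hcard : #S + 1 = Fintype.card ι) (ht : .inl t ∈ S) :
    Even #{v | v ∉ S ∧ IsDominating (slackRank r) (insert v S)} := by
  by_cases hS : IsDominating (slackRank r) S
  · obtain ⟨f, hf⟩ := exists_isArgmin (slackRank r) ⟨_, ht⟩
    -- Since `S` contains a point, the slack element `inr k` is above `f j` for every `j ≠ k`.
    rw [hS.card_filter_insert_eq_two (slackRank_injective r) hcard hf fun k =>
      ⟨.inr k, fun j hj => ((hf j).2 _ ht).trans_lt (slackRank_inl_lt_inr hj.symm)⟩]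
    exact even_two
  · rw [filter_false_of_mem fun v _ hv => hS (hv.2.mono (subset_insert v S)), card_empty]
    exact .zero

theorem isDominating_insert_inl_slack_iff [DecidableEq T] :
    IsDominating (slackRank r) (insert (.inl t) ((univ.erase i).image .inr)) ↔
      ∀ u, slackRank r i (.inl u) ≤ slackRank r i (.inl t) := by
  simp only [IsDominating, forall_mem_insert, forall_mem_image, mem_erase, mem_univ, and_true]
  refine ⟨fun h u => ?_, fun h v => ?_⟩
  · obtain ⟨j, hjt, hj⟩ := h (.inl u)
    rcases eq_or_ne j i with rfl | hji
    · exact hjt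
    · exact absurd (hj hji) slackRank_inr_self_lt_inl.not_ge
  · rcases v with u | j
    · exact ⟨i, h u, fun j hj => (slackRank_inl_lt_inr hj).le⟩
    · exact ⟨j, slackRank_inr_self_le _, fun _ _ => slackRank_inr_self_le _⟩

open scoped Classical in
theorem card_filter_insert_slack_eq_one [Nonempty T] [DecidableEq T] (r : ι → T → α) (i : ι) :
    #{v | v ∉ (univ.erase i).image .inr ∧
      IsDominating (slackRank r) (insert v ((univ.erase i).image .inr))} = 1 := by
  obtain ⟨t, ht⟩ := Finite.exists_max fun t => slackRank r i (.inl t)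
  refine card_eq_one.2 ⟨.inl t, ext fun v => ?_⟩
  simp only [mem_filter, mem_univ, true_and, mem_singleton]
  refine ⟨fun ⟨hv, hdom⟩ => ?_, ?_⟩
  · rcases v with u | j
    · have hu := isDominating_insert_inl_slack_iff.1 hdom
      exact slackRank_injective r i ((ht u).antisymm (hu t))
    · obtain rfl : j = i := by simpa using hv
      obtain ⟨k, hk⟩ := hdom (.inl t)
      refine absurd (hk (.inr k) ?_) slackRank_inr_self_lt_inl.not_ge
      simp [em]
  · rintro rfl
    exact ⟨by simp, isDominating_insert_inl_slack_iff.2 ht⟩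

/-- Call a dominating set of full size a room and a set with all colours except `i`, each once, a
door. Every door is in an even number of rooms, except for the door consisting of the slack elements
`inr j`, `j ≠ i`, which is in one room. A room lacking some colour has an even number of doors, so
counting incidences modulo two yields a room with all colours. -/
theorem exists_isDominating_image_eq_univ [Nonempty T] (r : ι → T → α) (c : T → ι) :
    ∃ R : Finset (T ⊕ ι), IsDominating (slackRank r) R ∧ R.image (Sum.elim c id) = univ := by
  classical
  obtain ⟨i⟩ : Nonempty ι := ‹Nonempty T›.map c
  let rooms : Finset (Finset (T ⊕ ι)) := {R | #R = Fintype.card ι ∧ IsDominating (slackRank r) R}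
  let doors : Finset (Finset (T ⊕ ι)) :=
    {S | #S + 1 = Fintype.card ι ∧ S.image (Sum.elim c id) = univ.erase i}
  let slackDoor : Finset (T ⊕ ι) := (univ.erase i).image .inr
  have card_rooms : ∀ S ∈ doors, #{v | v ∉ S ∧ insert v S ∈ rooms} =
      #{v | v ∉ S ∧ IsDominating (slackRank r) (insert v S)} := by
    intro S hS
    refine congrArg _ <| filter_congr fun v _ => and_congr_right fun hv => ?_
    simp [rooms, card_insert_of_notMem hv, (mem_filter.1 hS).2.1]
  have slackDoor_mem : slackDoor ∈ doors := by
    refine mem_filter.2 ⟨mem_univ _, ?_, by simp [slackDoor, image_image, Function.comp_def]⟩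
    rw [card_image_of_injective _ Sum.inr_injective, card_erase_add_one (mem_univ i), card_univ]
  have card_rooms_slackDoor : #{v | v ∉ slackDoor ∧ insert v slackDoor ∈ rooms} = 1 := by
    rw [card_rooms _ slackDoor_mem, card_filter_insert_slack_eq_one r i]
  have even_rooms : ∀ S ∈ doors, S ≠ slackDoor → Even #{v | v ∉ S ∧ insert v S ∈ rooms} := by
    intro S hS hne
    obtain ⟨hcard, himage⟩ := (mem_filter.1 hS).2
    obtain ⟨t, ht⟩ : ∃ t, .inl t ∈ S := by
      by_contra! h
      exact hne (eq_image_inr_of_forall_inl_notMem h himage)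
    rw [card_rooms S hS]
    exact even_card_filter_insert_of_inl_mem hcard ht
  obtain ⟨R, hRooms, hodd⟩ := exists_odd_card_filter_erase_mem slackDoor_mem
    (card_rooms_slackDoor ▸ odd_one) even_rooms
  obtain ⟨hcard, hdom⟩ := (mem_filter.1 hRooms).2
  refine ⟨R, hdom, by_contra fun hR => Nat.not_even_iff_odd.2 hodd ?_⟩
  convert even_card_filter_image_erase_eq_erase hcard hR i using 2
  refine filter_congr fun v hv => ?_
  simp [doors, card_erase_add_one hv, hcard]

end Scarf

theorem exists_finset_forall_exists_mem_color_le {T ι α : Type*} [Finite T] [LinearOrder α]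
    (r : ι → T → α) (c : T → ι) :
    ∃ R : Finset T, ∀ y, ∃ x ∈ R, ∀ t ∈ R, r (c x) y ≤ r (c x) t := by
  classical
  have := Fintype.ofFinite T
  cases isEmpty_or_nonempty T
  · exact ⟨∅, isEmptyElim⟩
  obtain ⟨R, hdom, himage⟩ := exists_isDominating_image_eq_univ
    (fun i : Set.range c => r i) (Set.rangeFactorization c)
  refine ⟨R.toLeft, fun y => ?_⟩
  obtain ⟨i, hi⟩ := hdom (.inl y)
  have inr_notMem : .inr i ∉ R := fun h => slackRank_inr_self_lt_inl.not_ge (hi _ h)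
  obtain ⟨x | j, hxR, hxi⟩ := Finset.mem_image.1 (himage ▸ Finset.mem_univ i)
  · obtain rfl : Set.rangeFactorization c x = i := hxi
    exact ⟨x, Finset.mem_toLeft.2 hxR, fun t ht =>
      le_of_slackRank_inl_le (r := fun i : Set.range c => r i) (hi _ (Finset.mem_toLeft.1 ht))⟩
  · obtain rfl : j = i := hxi
    exact absurd hxR inr_notMem

theorem exists_mem_forall_mem_of_isCompact {E ι : Type*} [PseudoMetricSpace E] {s : Set E}
    (hs : IsCompact s) {F : ι → Set E} (hF : ∀ i, IsClosed (F i))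
    (happrox : ∀ ε > 0, ∃ x ∈ s, ∀ i, ∃ y ∈ F i, dist y x < ε) : ∃ x ∈ s, ∀ i, x ∈ F i := by
  by_contra! hno
  obtain ⟨ε, hε, hball⟩ := lebesgue_number_lemma_of_metric hs (fun i => (hF i).isOpen_compl)
    fun x hx => Set.mem_iUnion.2 (hno x hx)
  obtain ⟨x, hx, hxF⟩ := happrox ε hε
  obtain ⟨i, hi⟩ := hball x hx
  obtain ⟨y, hy, hyx⟩ := hxF i
  exact hi hyx hy

theorem le_add_of_le_of_sum_le_sum_add {ι : Type*} [Fintype ι] {b x : ι → ℝ} {ε : ℝ}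
    (hbx : b ≤ x) (hsum : ∑ i, x i ≤ ∑ i, b i + ε) (i : ι) : x i ≤ b i + ε := by
  have := Finset.single_le_sum (f := x - b) (fun j _ => sub_nonneg.2 (hbx j)) (Finset.mem_univ i)
  simp only [Pi.sub_apply, Finset.sum_sub_distrib] at this
  linarith

section Simplex

variable {ι : Type*} [Fintype ι]

/-- If the sum of `b` were below `1 - ε`, spreading the deficit evenly over the coordinates of `b`
would give a point of the simplex whose approximation in `T` exceeds `b` in every coordinate. -/
theorem one_le_sum_add_of_forall_exists_le [Nonempty ι] {T : Set (ι → ℝ)} {b : ι → ℝ} {ε : ℝ}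
    (hT : stdSimplex ℝ ι ⊆ ⋃ t ∈ T, Metric.ball t (ε / Fintype.card ι)) (hb : 0 ≤ b)
    (hTb : ∀ t ∈ T, ∃ i, t i ≤ b i) : 1 ≤ ∑ i, b i + ε := by
  by_contra! hlt
  have card_pos : (0 : ℝ) < Fintype.card ι := mod_cast Fintype.card_pos
  obtain ⟨x, hx⟩ : (stdSimplex ℝ ι).Nonempty := Set.nonempty_coe_sort.1 inferInstance
  have ε_pos : 0 < ε := by
    obtain ⟨t, -, hxt⟩ := Set.mem_iUnion₂.1 (hT hx)
    exact (div_pos_iff_of_pos_right card_pos).1 (Metric.pos_of_mem_ball hxt)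
  let y : ι → ℝ := fun i => b i + (1 - ∑ j, b j) / Fintype.card ι
  have hy : y ∈ stdSimplex ℝ ι := by
    refine ⟨fun i => add_nonneg (hb i) (div_nonneg (by linarith) card_pos.le), ?_⟩
    simp only [y, Finset.sum_add_distrib, Finset.sum_const, Finset.card_univ, nsmul_eq_mul]
    field_simp
    ring
  obtain ⟨t, ht, hyt⟩ := Set.mem_iUnion₂.1 (hT hy)
  obtain ⟨i, hi⟩ := hTb t ht
  have hdist : y i - t i < ε / Fintype.card ι :=
    (le_abs_self _).trans_lt ((dist_le_pi_dist y t i).trans_lt hyt)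
  have hdeficit : ε / Fintype.card ι < (1 - ∑ j, b j) / Fintype.card ι := by
    gcongr
    linarith
  simp only [y] at hdist
  linarith

theorem exists_mem_stdSimplex_forall_le_or_exists_dist_le {F : ι → Set (ι → ℝ)}
    (hF : stdSimplex ℝ ι ⊆ ⋃ i, F i) [Nonempty ι] {ε : ℝ} (hε : 0 < ε) :
    ∃ x ∈ stdSimplex ℝ ι, ∀ i, x i ≤ ε ∨ ∃ y ∈ F i, dist y x ≤ ε := by
  classical
  obtain ⟨T, hTs, hTfin, hTcover⟩ := (isCompact_stdSimplex ℝ ι).finite_cover_balls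
    (div_pos hε (Nat.cast_pos.2 Fintype.card_pos) : 0 < ε / Fintype.card ι)
  have := hTfin.to_subtype
  choose c hc using fun t : T => Set.mem_iUnion.1 (hF (hTs t.2))
  obtain ⟨R, hR⟩ := exists_finset_forall_exists_mem_color_le (fun i (t : T) => t.1 i) c
  obtain ⟨t₀⟩ : Nonempty T := by
    obtain ⟨x, hx⟩ : (stdSimplex ℝ ι).Nonempty := Set.nonempty_coe_sort.1 inferInstance
    obtain ⟨t, ht, -⟩ := Set.mem_iUnion₂.1 (hTcover hx)
    exact ⟨⟨t, ht⟩⟩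
  obtain ⟨x, hxR, -⟩ := hR t₀
  let b : ι → ℝ := fun i => if i ∈ R.image c then R.inf' ⟨x, hxR⟩ (fun t => t.1 i) else 0
  have b_nonneg : 0 ≤ b := fun i => by
    simp only [b]
    split_ifs
    · exact (Finset.le_inf'_iff _ _).2 fun t _ => (hTs t.2).1 i
    · exact le_rfl
  have b_le : ∀ t ∈ R, b ≤ t := fun t ht i => by
    simp only [b]
    split_ifs
    · exact Finset.inf'_le (fun t : T => t.1 i) ht
    · exact (hTs t.2).1 i
  have one_le : 1 ≤ ∑ i, b i + ε := by
    refine one_le_sum_add_of_forall_exists_le hTcover b_nonneg fun t ht => ?_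
    obtain ⟨y, hy, hty⟩ := hR ⟨t, ht⟩
    refine ⟨c y, ?_⟩
    rw [show b (c y) = _ from if_pos (Finset.mem_image_of_mem c hy)]
    exact (Finset.le_inf'_iff _ _).2 hty
  have mem_Icc : ∀ t ∈ R, t.1 ∈ Set.Icc b (b + fun _ => ε) := fun t ht =>
    ⟨b_le t ht, le_add_of_le_of_sum_le_sum_add (b_le t ht) ((hTs t.2).2.trans_le one_le)⟩
  refine ⟨x, hTs x.2, fun i => ?_⟩
  by_cases hi : i ∈ R.image c
  · obtain ⟨y, hyR, rfl⟩ := Finset.mem_image.1 hi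
    have hyx := Real.dist_le_of_mem_pi_Icc (mem_Icc y hyR) (mem_Icc x hxR)
    exact .inr ⟨y, hc y, hyx.trans_eq (by simp [abs_of_pos hε])⟩
  · have hb : b i = 0 := if_neg hi
    exact .inl (((mem_Icc x hxR).2 i).trans_eq (by simp [hb]))

/-- The Knaster–Kuratowski–Mazurkiewicz lemma in Sperner's form: here it is the face opposite to a
vertex that lies in the set of that vertex. -/
theorem exists_mem_stdSimplex_forall_mem_of_face_subset [Nonempty ι] {F : ι → Set (ι → ℝ)}
    (hF : ∀ i, IsClosed (F i)) (hcover : stdSimplex ℝ ι ⊆ ⋃ i, F i)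
    (hface : ∀ i, ∀ x ∈ stdSimplex ℝ ι, x i = 0 → x ∈ F i) :
    ∃ x ∈ stdSimplex ℝ ι, ∀ i, x ∈ F i := by
  classical
  suffices ∃ x ∈ stdSimplex ℝ ι, ∀ i, x ∈ F i ∪ {x | x i ≤ 0} by
    obtain ⟨x, hx, hxF⟩ := this
    exact ⟨x, hx, fun i => (hxF i).elim id fun h => hface i x hx (h.antisymm (hx.1 i))⟩
  refine exists_mem_forall_mem_of_isCompact (isCompact_stdSimplex ℝ ι)
    (fun i => (hF i).union (isClosed_le (continuous_apply i) continuous_const)) fun ε hε => ?_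
  obtain ⟨x, hx, h⟩ := exists_mem_stdSimplex_forall_le_or_exists_dist_le hcover (half_pos hε)
  refine ⟨x, hx, fun i => ?_⟩
  rcases h i with hxi | ⟨y, hy, hyx⟩
  · refine ⟨Function.update x i 0, .inr (by simp), (dist_pi_lt_iff hε).2 fun j => ?_⟩
    rcases eq_or_ne j i with rfl | hji
    · simpa [abs_of_nonneg (hx.1 j)] using hxi.trans_lt (half_lt_self hε)
    · simpa [hji] using hε
  · exact ⟨y, .inl hy, hyx.trans_lt (half_lt_self hε)⟩

/-- For `u = id` this is Brouwer's fixed point theorem on the simplex. -/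
theorem exists_mem_stdSimplex_eq_of_le_on_faces [Nonempty ι] {u v : (ι → ℝ) → ι → ℝ}
    (hu : ContinuousOn u (stdSimplex ℝ ι)) (hv : ContinuousOn v (stdSimplex ℝ ι))
    (hsum : ∀ x ∈ stdSimplex ℝ ι, ∑ i, u x i = ∑ i, v x i)
    (hface : ∀ i, ∀ x ∈ stdSimplex ℝ ι, x i = 0 → u x i ≤ v x i) :
    ∃ x ∈ stdSimplex ℝ ι, u x = v x := by
  obtain ⟨x, hx, hle⟩ := exists_mem_stdSimplex_forall_mem_of_face_subset
    (F := fun i => {x ∈ stdSimplex ℝ ι | u x i ≤ v x i})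
    (fun i => (isClosed_stdSimplex ℝ ι).isClosed_le
      (continuousOn_pi.1 hu i) (continuousOn_pi.1 hv i))
    (fun x hx => by
      obtain ⟨i, -, hi⟩ := Finset.exists_le_of_sum_le Finset.univ_nonempty (hsum x hx).le
      exact Set.mem_iUnion.2 ⟨i, hx, hi⟩)
    fun i x hx hxi => ⟨hx, hface i x hx hxi⟩
  have heq := (Finset.sum_eq_sum_iff_of_le fun i _ => (hle i).2).1 (hsum x hx)
  exact ⟨x, hx, funext fun i => heq i (Finset.mem_univ i)⟩

/-- The relative interior of the standard simplex: the admissible size profiles, in which every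
community is nonempty. -/
def openSimplex (ι : Type*) [Fintype ι] : Set (ι → ℝ) :=
  {m | (∀ i, 0 < m i) ∧ ∑ i, m i = 1}

/-- The homothety about the barycenter that takes the face `x i = 0` of the simplex to
the slice `m i = δ`. -/
def contractSimplex (δ : ℝ) (x : ι → ℝ) : ι → ℝ :=
  fun i => δ + (1 - Fintype.card ι * δ) * x i

theorem continuous_contractSimplex (δ : ℝ) : Continuous (contractSimplex (ι := ι) δ) := by
  unfold contractSimplex
  fun_prop

theorem contractSimplex_mem_openSimplex {δ : ℝ} (hδ : 0 < δ) (hδ' : Fintype.card ι * δ ≤ 1)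
    {x : ι → ℝ} (hx : x ∈ stdSimplex ℝ ι) : contractSimplex δ x ∈ openSimplex ι := by
  refine ⟨fun i => add_pos_of_pos_of_nonneg hδ (mul_nonneg (sub_nonneg.2 hδ') (hx.1 i)), ?_⟩
  simp [contractSimplex, Finset.sum_add_distrib, ← Finset.mul_sum, hx.2]

theorem exists_mem_openSimplex_isFixedPt [Nonempty ι] {g : (ι → ℝ) → ι → ℝ}
    (hg : ContinuousOn g (openSimplex ι)) (hsum : ∀ m ∈ openSimplex ι, ∑ i, g m i = 1)
    (hsmall : ∃ m₀ > 0, ∀ i, ∀ m ∈ openSimplex ι, m i < m₀ → g m i ≤ m i) :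
    ∃ m ∈ openSimplex ι, Function.IsFixedPt g m := by
  obtain ⟨m₀, hm₀, hsmall⟩ := hsmall
  have card_pos : (0 : ℝ) < Fintype.card ι := mod_cast Fintype.card_pos
  obtain ⟨δ, hδ, hδm₀, hδcard⟩ : ∃ δ > 0, δ < m₀ ∧ Fintype.card ι * δ ≤ 1 :=
    ⟨min (m₀ / 2) (1 / Fintype.card ι), by positivity, min_lt_of_left_lt (half_lt_self hm₀),
      (le_div_iff₀' card_pos).1 (min_le_right _ _)⟩
  have contract_mem := fun x => contractSimplex_mem_openSimplex (ι := ι) hδ hδcard (x := x)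
  have contract_cont := (continuous_contractSimplex (ι := ι) δ).continuousOn (s := stdSimplex ℝ ι)
  obtain ⟨x, hx, heq⟩ := exists_mem_stdSimplex_eq_of_le_on_faces
    (hg.comp contract_cont contract_mem) contract_cont
    (fun x hx => (hsum _ (contract_mem x hx)).trans (contract_mem x hx).2.symm)
    fun i x hx hxi => hsmall i _ (contract_mem x hx) (by simpa [contractSimplex, hxi] using hδm₀)
  exact ⟨contractSimplex δ x, contract_mem x hx, heq⟩

end Simplex

section Choice

variable {ι : Type*}

theorem exists_measurable_argmin [Finite ι] [Nonempty ι] [MeasurableSpace ι] :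
    ∃ σ : (ι → ℝ) → ι, Measurable σ ∧ ∀ (a : ι → ℝ) j, a (σ a) ≤ a j := by
  -- Breaking ties by the set of minimizers alone makes the choice measurable.
  let minimizers : (ι → ℝ) → Set ι := fun a => {i | ∀ j, a i ≤ a j}
  have measurable_minimizers : Measurable minimizers :=
    measurable_set_iff.2 fun i => .forall fun j => measurableSet_setOfPred.1 <|
      measurableSet_le (measurable_pi_apply i) (measurable_pi_apply j)
  have minimizers_nonempty : ∀ a, (minimizers a).Nonempty := Finite.exists_min
  exact ⟨fun a => Classical.epsilon (· ∈ minimizers a),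
    (measurable_of_finite fun s : Set ι => Classical.epsilon (· ∈ s)).comp measurable_minimizers,
    fun a => Classical.epsilon_spec (minimizers_nonempty a)⟩

theorem eventually_argmin_eq [Finite ι] {σ : (ι → ℝ) → ι} (hσ : ∀ (a : ι → ℝ) j, a (σ a) ≤ a j)
    {a : ι → ℝ} (ha : Function.Injective a) : ∀ᶠ b in nhds a, σ b = σ a := by
  have eventually_lt : ∀ᶠ b in nhds a, ∀ j, j ≠ σ a → b (σ a) < b j :=
    Filter.eventually_all.2 fun j => Filter.eventually_imp_distrib_left.2 fun hj =>
      (continuous_apply (σ a)).continuousAt.eventually_lt (continuous_apply j).continuousAt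
        ((hσ a j).lt_of_ne (ha.ne hj.symm))
  filter_upwards [eventually_lt] with b hb
  by_contra hne
  exact (hb _ hne).not_ge (hσ b (σ a))

variable {X : Type*} [MeasurableSpace X]

/-- The measure of the agents `x` who choose community `i` when facing the costs `a x` and choosing
according to `σ`. -/
noncomputable def choiceShare (μ : Measure X) (σ : (ι → ℝ) → ι) (a : X → ι → ℝ) (i : ι) : ℝ :=
  μ.real {x | σ (a x) = i}

variable [MeasurableSpace ι] [MeasurableSingletonClass ι] {μ : Measure X} {σ : (ι → ℝ) → ι}

theorem sum_choiceShare [Fintype ι] [IsProbabilityMeasure μ] (hσ : Measurable σ) {a : X → ι → ℝ}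
    (ha : Measurable a) : ∑ i, choiceShare μ σ a i = 1 := by
  have := sum_measureReal_preimage_singleton (μ := μ) (f := σ ∘ a) Finset.univ
    fun i _ => (hσ.comp ha) (measurableSet_singleton i)
  simpa [choiceShare, Set.preimage] using this

theorem continuous_choiceShare [Finite ι] [IsFiniteMeasure μ] {P : Type*} [TopologicalSpace P]
    [FirstCountableTopology P] (hσ : Measurable σ) (hσ_le : ∀ (a : ι → ℝ) j, a (σ a) ≤ a j)
    {a : P → X → ι → ℝ} (ha_meas : ∀ p, Measurable (a p)) (ha_cont : ∀ x, Continuous (a · x))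
    (ha_inj : ∀ p, ∀ᵐ x ∂μ, Function.Injective (a p x)) :
    Continuous fun p => choiceShare μ σ (a p) := by
  refine continuous_pi fun i => continuous_iff_continuousAt.2 fun p => ?_
  have measurableSet_choice : ∀ q, MeasurableSet {x | σ (a q x) = i} := fun q =>
    (hσ.comp (ha_meas q)) (measurableSet_singleton i)
  refine (ENNReal.tendsto_toReal (measure_ne_top μ _)).comp <|
    tendsto_measure_of_ae_tendsto_indicator_of_isFiniteMeasure _ (measurableSet_choice p)
      measurableSet_choice ?_
  filter_upwards [ha_inj p] with x hx
  filter_upwards [(ha_cont x).continuousAt.eventually (eventually_argmin_eq hσ_le hx)] with q hq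
  exact hq ▸ Iff.rfl

end Choice

theorem exists_inv_card_le_of_mem_openSimplex {ι : Type*} [Fintype ι] [Nonempty ι] {m : ι → ℝ}
    (hm : m ∈ openSimplex ι) : ∃ i, (Fintype.card ι : ℝ)⁻¹ ≤ m i := by
  obtain ⟨i, -, hi⟩ := Finset.exists_le_of_sum_le (f := fun _ => (Fintype.card ι : ℝ)⁻¹) (g := m)
    Finset.univ_nonempty (by simp [hm.2])
  exact ⟨i, hi⟩

theorem exists_pos_forall_argmin_eq_empty_of_lt {X ι : Type*} [Fintype ι] [Nonempty ι]
    {c : ι → X → (ι → ℝ) → ℝ}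
    (hbound : ∀ δ > (0 : ℝ), ∃ A : ℝ, ∀ i, ∀ x, ∀ m ∈ openSimplex ι, δ ≤ m i → c i x m ≤ A)
    (hsmall : ∀ A : ℝ, ∃ m₀ > (0 : ℝ), ∀ i, ∀ x, ∀ m ∈ openSimplex ι, m i < m₀ → A < c i x m) :
    ∃ m₀ > 0, ∀ i, ∀ m ∈ openSimplex ι, m i < m₀ → {x | ∀ j, c i x m ≤ c j x m} = ∅ := by
  obtain ⟨A, hA⟩ := hbound (Fintype.card ι : ℝ)⁻¹ (by simp [Fintype.card_pos])
  obtain ⟨m₀, hm₀, hAlt⟩ := hsmall A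
  refine ⟨m₀, hm₀, fun i m hm hi => Set.eq_empty_of_forall_notMem fun x hx => ?_⟩
  obtain ⟨j, hj⟩ := exists_inv_card_le_of_mem_openSimplex hm
  exact ((hA j x m hm hj).trans_lt (hAlt i x m hm hi)).not_ge (hx j)

theorem tiebout_equilibrium_exists_general
    {X : Type*} [MeasurableSpace X] (μ : Measure X) [IsProbabilityMeasure μ]
    {ι : Type*} [Fintype ι] [Nonempty ι] [MeasurableSpace ι] [MeasurableSingletonClass ι]
    (c : ι → X → (ι → ℝ) → ℝ)
    (hc_cont : ∀ i x, ContinuousOn (c i x) (openSimplex ι))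
    (hc_meas : ∀ i, ∀ m ∈ openSimplex ι, Measurable (fun x => c i x m))
    (hyperbola : ∀ i j, i ≠ j → ∀ m ∈ openSimplex ι, μ {x | c i x m = c j x m} = 0)
    (hsmall : ∃ m₀ > 0, ∀ i, ∀ m ∈ openSimplex ι, m i < m₀ →
      μ.real {x | ∀ j, c i x m ≤ c j x m} ≤ m i) :
    ∃ m ∈ openSimplex ι, ∃ I : X → ι, Measurable I ∧
      (∀ i, μ.real {x | I x = i} = m i) ∧ ∀ x j, c (I x) x m ≤ c j x m := by
  obtain ⟨σ, hσ, hσ_le⟩ := exists_measurable_argmin (ι := ι)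
  let cost : (ι → ℝ) → X → ι → ℝ := fun m x i => c i x m
  have cost_meas : ∀ m ∈ openSimplex ι, Measurable (cost m) := fun m hm =>
    measurable_pi_lambda _ fun i => hc_meas i m hm
  have cost_inj : ∀ m ∈ openSimplex ι, ∀ᵐ x ∂μ, Function.Injective (cost m x) := by
    intro m hm
    have : ∀ᵐ x ∂μ, ∀ i j, i ≠ j → c i x m ≠ c j x m :=
      ae_all_iff.2 fun i => ae_all_iff.2 fun j => ae_all_iff.2 fun hij =>
        measure_eq_zero_iff_ae_notMem.1 (hyperbola i j hij m hm)
    filter_upwards [this] with x hx i j hij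
    exact not_imp_not.1 (hx i j) hij
  have share_cont : ContinuousOn (fun m => choiceShare μ σ (cost m)) (openSimplex ι) :=
    continuousOn_iff_continuous_domRestrict.2 <| continuous_choiceShare hσ hσ_le
      (fun m => cost_meas m m.2)
      (fun x => continuous_pi fun i => (hc_cont i x).domRestrict) fun m => cost_inj m m.2
  obtain ⟨m₀, hm₀, hsmall⟩ := hsmall
  have share_le : ∀ i, ∀ m ∈ openSimplex ι, m i < m₀ → choiceShare μ σ (cost m) i ≤ m i := by
    refine fun i m hm hi => (measureReal_mono ?_).trans (hsmall i m hm hi)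
    rintro x rfl
    exact hσ_le (cost m x)
  obtain ⟨m, hm, hfix⟩ := exists_mem_openSimplex_isFixedPt share_cont
    (fun m hm => sum_choiceShare hσ (cost_meas m hm)) ⟨m₀, hm₀, share_le⟩
  exact ⟨m, hm, fun x => σ (cost m x), hσ.comp (cost_meas m hm), congrFun hfix,
    fun x => hσ_le (cost m x)⟩

/-- Main existence theorem (Theorem 1): under the hyperbola property and
small-group inefficiency there exists a Tiebout–Nash equilibrium in which all
`n` communities are nonempty: there are sizes `m* ∈ M` and a measurable
assignment `I` such that each group's realized measure equals `m* i`,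
almost every agent is assigned to a cost-minimizing community given `m*`,
and every `m* i` is positive. -/
theorem tiebout_equilibrium_exists
    {X : Type*} [MeasurableSpace X] (μ : Measure X) [IsFiniteMeasure μ]
    (hμ : μ Set.univ = 1)
    (n : ℕ) (hn : 2 ≤ n)
    (M : Set (Fin n → ℝ))
    (hM : M = {m : Fin n → ℝ | (∀ i, 0 < m i) ∧ ∑ i, m i = 1})
    (c : Fin n → X → (Fin n → ℝ) → ℝ)
    (hc_cont : ∀ i x, ContinuousOn (c i x) M)
    (hc_meas : ∀ i m, Measurable (fun x => c i x m))
    (hyperbola : ∀ i j, i ≠ j → ∀ m ∈ M, μ {x | c i x m = c j x m} = 0)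
    (hbound : ∀ δ > (0:ℝ), ∃ A : ℝ, ∀ i, ∀ x, ∀ m ∈ M, δ ≤ m i → c i x m ≤ A)
    (hsmall : ∀ A : ℝ, ∃ m₀ > (0:ℝ), ∀ i, ∀ x, ∀ m ∈ M, m i < m₀ → A < c i x m) :
    ∃ m' ∈ M, ∃ I : X → Fin n, Measurable I ∧
      (∀ i, (μ {x | I x = i}).toReal = m' i) ∧
      (∀ᵐ x ∂μ, ∀ j, c (I x) x m' ≤ c j x m') ∧
      (∀ i, 0 < m' i) := by
  subst hM
  have : IsProbabilityMeasure μ := ⟨hμ⟩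
  have : NeZero n := ⟨by omega⟩
  obtain ⟨m₀, hm₀, hempty⟩ := exists_pos_forall_argmin_eq_empty_of_lt hbound hsmall
  obtain ⟨m, hm, I, hI, hsize, hbest⟩ := tiebout_equilibrium_exists_general μ c hc_cont
    (fun i m _ => hc_meas i m) hyperbola
    ⟨m₀, hm₀, fun i m hm hi => hempty i m hm hi ▸ measureReal_empty.trans_le (hm.1 i).le⟩
  exact ⟨m, hm, I, hI, hsize, .of_forall hbest, hm.1⟩
end

section
/- Let T = T^{α₁} × ... × T^{α_β} be a product of standard simplexes and let Γ = {(j,k) : j ∈ {1,...,β}, k ∈ {1,...,α_j + 1}} index the vertices. Suppose closed sets T^{jk} ⊆ T for (j,k) ∈ Γ satisfy ⋃_{(j,k)∈Γ} T^{jk} = T and T^{jk} ⊇ {t ∈ T : t^j_k = 0} for each (j,k). Then there exists j such that ⋂_k T^{jk} ≠ ∅. -/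
/-!
Let `f j k ≥ 0` be continuous with zero set `C j k`, and let `σ j` permute the vertices of the
`j`-th factor cyclically. If the conclusion fails, `t ↦ (f j (σ j)⁻¹ k t / ∑ i, f j i t)` is a
continuous self-map of the simplotope, so it has a fixed point `t` by Brouwer's theorem. At such a
point `t ∈ C j k` makes the coordinate `σ j k` of `t j` vanish, hence `t ∈ C j (σ j k)` by the facet
condition. Since some `C j k` contains `t`, going around the cycle gives `t ∈ C j k` for all `k`.

For Brouwer's theorem, let `g` be `C¹` with support in a ball `K`, and let `φ` be polynomial along
lines. Then `∫ x in K, φ (x + t • g x) * det (1 + t • g' x)` is a polynomial in `t`. By change of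
variables it equals `∫ x in K, φ x` for small `t > 0`, hence also for `t = 1`. If `x + g x` never
vanished, the kernels `φ y = (M ^ 2 - ‖y‖ ^ 2) ^ m`, which concentrate at the origin as `m → ∞`,
would make the integral at `t = 1` exponentially smaller than `∫ x in K, φ x`.
-/

open MeasureTheory Metric Set Function Polynomial Module
open scoped NNReal

section PolynomialFunctions

/-- `f` is the evaluation map of a polynomial of degree at most `N`. The degree bound is part of the
notion so that a whole family of such functions can be interpolated at the same nodes. -/
def IsPolynomialFunctionOfDegreeLE {R : Type*} [Semiring R] (N : ℕ) (f : R → R) : Prop :=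
  ∃ P : R[X], P.natDegree ≤ N ∧ ∀ t, P.eval t = f t

namespace IsPolynomialFunctionOfDegreeLE

variable {R : Type*} [CommSemiring R] {M N : ℕ} {f g : R → R}

lemma mul (hf : IsPolynomialFunctionOfDegreeLE M f) (hg : IsPolynomialFunctionOfDegreeLE N g) :
    IsPolynomialFunctionOfDegreeLE (M + N) fun t => f t * g t := by
  obtain ⟨P, hPdeg, hP⟩ := hf
  obtain ⟨Q, hQdeg, hQ⟩ := hg
  exact ⟨P * Q, natDegree_mul_le_of_le hPdeg hQdeg, fun t => by rw [eval_mul, hP, hQ]⟩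

lemma pow (hf : IsPolynomialFunctionOfDegreeLE N f) (m : ℕ) :
    IsPolynomialFunctionOfDegreeLE (m * N) fun t => f t ^ m := by
  obtain ⟨P, hPdeg, hP⟩ := hf
  exact ⟨P ^ m, natDegree_pow_le_of_le m hPdeg, fun t => by rw [eval_pow, hP]⟩

end IsPolynomialFunctionOfDegreeLE

lemma isPolynomialFunctionOfDegreeLE_det_one_add_smul {K V : Type*} [Field K] [AddCommGroup V]
    [Module K V] [FiniteDimensional K V] (A : V →ₗ[K] V) :
    IsPolynomialFunctionOfDegreeLE (finrank K V) fun t => LinearMap.det (1 + t • A) := by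
  let b := finBasis K V
  let M := LinearMap.toMatrix b b A
  refine ⟨((X : K[X]) • M.map C + (1 : Matrix _ _ K).map C).det,
    by simpa using natDegree_det_X_add_C_le M 1, fun t => ?_⟩
  have hmatrix : LinearMap.toMatrix b b (1 + t • A) = t • M + 1 := by
    rw [map_add, map_smul, LinearMap.toMatrix_one, add_comm]
  beta_reduce
  rw [← LinearMap.det_toMatrix b, hmatrix, ← coe_evalRingHom, RingHom.map_det]
  congr 1
  ext i j
  simp [Matrix.one_apply, apply_ite, mul_comm t]

lemma isPolynomialFunctionOfDegreeLE_sub_norm_add_smul_sq {E : Type*} [NormedAddCommGroup E]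
    [InnerProductSpace ℝ E] (a : ℝ) (x v : E) :
    IsPolynomialFunctionOfDegreeLE 2 fun t : ℝ => a - ‖x + t • v‖ ^ 2 := by
  refine ⟨C (-‖v‖ ^ 2) * X ^ 2 + C (-2 * inner ℝ x v) * X + C (a - ‖x‖ ^ 2),
    natDegree_quadratic_le, fun t => ?_⟩
  simp only [norm_add_sq_real, inner_smul_right, norm_smul, mul_pow, Real.norm_eq_abs, sq_abs,
    eval_add, eval_mul, eval_C, eval_pow, eval_X]
  ring

lemma integral_eq_of_isPolynomialFunctionOfDegreeLE {α : Type*} [MeasurableSpace α] {μ : Measure α}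
    {N : ℕ} {f : ℝ → α → ℝ} {S : Set ℝ} {c : ℝ}
    (hpoly : ∀ x, IsPolynomialFunctionOfDegreeLE N fun t => f t x) (hS : S.Infinite)
    (hint : ∀ t ∈ S, Integrable (f t) μ) (hc : ∀ t ∈ S, ∫ x, f t x ∂μ = c) (t : ℝ) :
    ∫ x, f t x ∂μ = c := by
  obtain ⟨s, hsS, hscard⟩ := hS.exists_subset_card_eq (N + 1)
  let w (u : ℝ) : ℝ := (Lagrange.basis s id u).eval t
  have hw : ∑ u ∈ s, w u = 1 := by
    have hs : s.Nonempty := Finset.card_pos.mp (by lia)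
    rw [← eval_finsetSum, Lagrange.sum_basis injective_id.injOn hs, eval_one]
  have hinterp (x : α) : f t x = ∑ u ∈ s, w u * f u x := by
    obtain ⟨P, hPdeg, hP : ∀ u, P.eval u = f u x⟩ := hpoly x
    have hdeg : P.degree < s.card :=
      degree_le_natDegree.trans_lt (by rw [hscard]; exact_mod_cast Nat.lt_succ_of_le hPdeg)
    rw [← hP, Lagrange.eq_interpolate (v := id) injective_id.injOn hdeg, Lagrange.interpolate_apply,
      eval_finsetSum]
    exact Finset.sum_congr rfl fun u _ => by rw [eval_mul, eval_C, id, hP, mul_comm]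
  calc ∫ x, f t x ∂μ = ∑ u ∈ s, w u * ∫ x, f u x ∂μ := by
        simp_rw [hinterp]
        rw [integral_finsetSum _ fun u hu => (hint u (hsS hu)).const_mul _]
        simp_rw [integral_const_mul]
    _ = ∑ u ∈ s, w u * c := Finset.sum_congr rfl fun u hu => by rw [hc u (hsS hu)]
    _ = c := by rw [← Finset.sum_mul, hw, one_mul]

end PolynomialFunctions

section SmallPerturbations

lemma det_one_add_pos_of_norm_lt_one {E : Type*} [NormedAddCommGroup E] [NormedSpace ℝ E]
    [FiniteDimensional ℝ E] {A : E →L[ℝ] E} (hA : ‖A‖ < 1) : 0 < (1 + A).det := by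
  have hunit : ∀ B ∈ ball (0 : E →L[ℝ] E) 1, (1 + B).det ≠ 0 := by
    intro B hB
    have hB1 : IsUnit (1 + B) := by
      simpa using isUnit_one_sub_of_norm_lt_one (x := -B) (by simpa using hB)
    exact ((hB1.map ContinuousLinearMap.toLinearMapRingHom).map LinearMap.det).ne_zero
  have hcont : ContinuousOn (fun B : E →L[ℝ] E => (1 + B).det) (ball 0 1) :=
    (ContinuousLinearMap.continuous_det.comp (by fun_prop)).continuousOn
  by_contra! hneg
  have hone : (1 + (0 : E →L[ℝ] E)).det = 1 := by simp [ContinuousLinearMap.det]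
  obtain ⟨B, hB, hB0⟩ := (convex_ball (0 : E →L[ℝ] E) 1).isPreconnected.intermediate_value
    (by simpa using hA) (by simp) hcont ⟨hneg, hone.symm ▸ zero_le_one⟩
  exact hunit B hB hB0

lemma bijective_add_of_lipschitzWith_lt_one {E : Type*} [NormedAddCommGroup E] [CompleteSpace E]
    {g : E → E} {K : ℝ≥0} (hg : LipschitzWith K g) (hK : K < 1) :
    Bijective fun x => x + g x := by
  rw [bijective_iff_existsUnique]
  intro y
  have hcontr : ContractingWith K fun x => y - g x :=
    ⟨hK, LipschitzWith.of_dist_le_mul fun u v => by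
      rw [dist_sub_left]; exact hg.dist_le_mul u v⟩
  exact ⟨hcontr.fixedPoint, (eq_sub_iff_add_eq.mp hcontr.fixedPoint_isFixedPt.symm),
    fun x hx => hcontr.fixedPoint_unique (eq_sub_iff_add_eq.mpr hx).symm⟩

lemma image_eq_self_of_eqOn_compl {α : Type*} {f : α → α} {s : Set α} (hf : Bijective f)
    (hs : EqOn f id sᶜ) : f '' s = s :=
  compl_injective <| by rw [← image_compl_eq hf, hs.image_eq, image_id]

variable {E : Type*} [NormedAddCommGroup E] [NormedSpace ℝ E] [FiniteDimensional ℝ E]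
  [MeasurableSpace E] [BorelSpace E] {μ : Measure E} [μ.IsAddHaarMeasure]
  {g : E → E} {s : Set E}

lemma setIntegral_comp_add_mul_det_eq_of_lipschitzWith_lt_one {K : ℝ≥0} (hg : Differentiable ℝ g)
    (hlip : LipschitzWith K g) (hK : K < 1) (hs : MeasurableSet s) (hsupp : support g ⊆ s)
    (k : E → ℝ) : ∫ x in s, k (x + g x) * (1 + fderiv ℝ g x).det ∂μ = ∫ x in s, k x ∂μ := by
  have hbij : Bijective fun x => x + g x := bijective_add_of_lipschitzWith_lt_one hlip hK
  have himage : (fun x => x + g x) '' s = s := image_eq_self_of_eqOn_compl hbij fun x hx => by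
    simp [notMem_support.mp (notMem_subset hsupp hx)]
  have hderiv (x : E) : HasFDerivAt (fun x => x + g x) (1 + fderiv ℝ g x) x :=
    (hasFDerivAt_id x).add (hg x).hasFDerivAt
  have hdet (x : E) : 0 < (1 + fderiv ℝ g x).det :=
    det_one_add_pos_of_norm_lt_one ((norm_fderiv_le_of_lipschitz ℝ hlip).trans_lt hK)
  have hchange := integral_image_eq_integral_abs_det_fderiv_smul μ hs
    (fun x _ => (hderiv x).hasFDerivWithinAt) hbij.injective.injOn k
  rw [himage] at hchange
  simp_rw [hchange, abs_of_pos (hdet _), smul_eq_mul, mul_comm]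

lemma setIntegral_comp_add_mul_det_eq {N : ℕ} {k : E → ℝ} (hg : ContDiff ℝ 1 g)
    (hs : IsCompact s) (hsupp : support g ⊆ s) (hk : Continuous k)
    (hpoly : ∀ x v, IsPolynomialFunctionOfDegreeLE N fun t : ℝ => k (x + t • v)) :
    ∫ x in s, k (x + g x) * (1 + fderiv ℝ g x).det ∂μ = ∫ x in s, k x ∂μ := by
  obtain ⟨L, hL⟩ := hg.lipschitzWith_of_hasCompactSupport
    (HasCompactSupport.of_support_subset_isCompact hs hsupp) one_ne_zero
  have hdiff : Differentiable ℝ g := hg.differentiable one_ne_zero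
  let J (t : ℝ) (x : E) : ℝ := k (x + t • g x) * (1 + t • fderiv ℝ g x).det
  have hJpoly (x : E) : IsPolynomialFunctionOfDegreeLE (N + finrank ℝ E) fun t => J t x :=
    (hpoly x (g x)).mul (isPolynomialFunctionOfDegreeLE_det_one_add_smul _)
  have hJint (t : ℝ) : IntegrableOn (J t) s μ := by
    have hcont : Continuous (J t) := by
      have : Continuous g := hg.continuous
      have : Continuous (fderiv ℝ g) := hg.continuous_fderiv one_ne_zero
      exact (hk.comp (by fun_prop)).mul (ContinuousLinearMap.continuous_det.comp (by fun_prop))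
    exact hcont.continuousOn.integrableOn_compact hs
  have hJsmall : ∀ t ∈ Ioo 0 (1 / (L + 1) : ℝ), ∫ x in s, J t x ∂μ = ∫ x in s, k x ∂μ := by
    rintro t ⟨ht0, htL⟩
    have hlip : LipschitzWith (‖t‖₊ * L) (t • g) := (lipschitzWith_smul t).comp hL
    have hlt : ‖t‖₊ * L < 1 := by
      have htL1 : t * (L + 1) < 1 := (lt_div_iff₀ (by positivity)).mp htL
      rw [← NNReal.coe_lt_coe, NNReal.coe_mul, coe_nnnorm, Real.norm_of_nonneg ht0.le,
        NNReal.coe_one]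
      linarith
    have h := setIntegral_comp_add_mul_det_eq_of_lipschitzWith_lt_one (μ := μ)
      (hdiff.const_smul t) hlip hlt hs.measurableSet
      ((support_const_smul_subset t g).trans hsupp) k
    simpa only [fderiv_const_smul (hdiff _), Pi.smul_apply] using h
  have h1 := integral_eq_of_isPolynomialFunctionOfDegreeLE hJpoly
    (Ioo_infinite (by positivity)) (fun t _ => hJint t) hJsmall 1
  simpa only [J, one_smul] using h1

end SmallPerturbations

section Concentration

lemma exists_integral_pow_mul_lt_integral_pow {α : Type*} [MeasurableSpace α] {ν : Measure α}
    {φ ψ w : α → ℝ} {A : Set α} {p q : ℝ} (hp : 0 ≤ p) (hpq : p < q)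
    (hφ : ∀ᵐ x ∂ν, |φ x| ≤ p) (hψ : 0 ≤ᵐ[ν] ψ) (hψA : ∀ x ∈ A, q ≤ ψ x)
    (hA : MeasurableSet A) (hνA : 0 < ν.real A) (hw : Integrable w ν)
    (hψint : ∀ m : ℕ, Integrable (fun x => ψ x ^ m) ν) :
    ∃ m : ℕ, ∫ x, φ x ^ m * w x ∂ν < ∫ x, ψ x ^ m ∂ν := by
  have hq : 0 < q := hp.trans_lt hpq
  have hupper (m : ℕ) : ∫ x, φ x ^ m * w x ∂ν ≤ p ^ m * ∫ x, ‖w x‖ ∂ν := by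
    rw [← integral_const_mul]
    refine (Real.le_norm_self _).trans (norm_integral_le_of_norm_le (hw.norm.const_mul _) ?_)
    filter_upwards [hφ] with x hx
    rw [norm_mul, norm_pow]
    gcongr
    exact hx
  have hlower (m : ℕ) : q ^ m * ν.real A ≤ ∫ x, ψ x ^ m ∂ν :=
    calc q ^ m * ν.real A ≤ ∫ x in A, ψ x ^ m ∂ν :=
          setIntegral_ge_of_const_le_real hA (ENNReal.toReal_pos_iff.mp hνA).2.ne
            (fun x hx => pow_le_pow_left₀ hq.le (hψA x hx) m) (hψint m).integrableOn
      _ ≤ ∫ x, ψ x ^ m ∂ν :=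
          setIntegral_le_integral (hψint m) (hψ.mono fun x hx => pow_nonneg hx m)
  let W := ∫ x, ‖w x‖ ∂ν
  have hW : 0 < W + 1 :=
    add_pos_of_nonneg_of_pos (integral_nonneg fun x => norm_nonneg _) one_pos
  obtain ⟨m, hm⟩ := exists_pow_lt_of_lt_one (div_pos hνA hW) ((div_lt_one hq).mpr hpq)
  rw [div_pow, div_lt_div_iff₀ (pow_pos hq m) hW] at hm
  refine ⟨m, ?_⟩
  calc ∫ x, φ x ^ m * w x ∂ν ≤ p ^ m * W := hupper m
    _ ≤ p ^ m * (W + 1) := by gcongr; linarith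
    _ < ν.real A * q ^ m := hm
    _ = q ^ m * ν.real A := mul_comm _ _
    _ ≤ ∫ x, ψ x ^ m ∂ν := hlower m

lemma exists_setIntegral_pow_sub_norm_sq_mul_lt {E : Type*} [NormedAddCommGroup E] [NormedSpace ℝ E]
    [FiniteDimensional ℝ E] [MeasurableSpace E] [BorelSpace E] {μ : Measure E}
    [μ.IsAddHaarMeasure] {G : E → E} {w : E → ℝ} {d R M : ℝ} (hd : 0 < d) (hR : 0 < R)
    (hRM : R ≤ M) (hG : ∀ x ∈ closedBall 0 R, d ≤ ‖G x‖ ∧ ‖G x‖ ≤ M)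
    (hw : IntegrableOn w (closedBall 0 R) μ) :
    ∃ m : ℕ, ∫ x in closedBall 0 R, (M ^ 2 - ‖G x‖ ^ 2) ^ m * w x ∂μ <
      ∫ x in closedBall 0 R, (M ^ 2 - ‖x‖ ^ 2) ^ m ∂μ := by
  obtain ⟨r, hr, hrdR⟩ := exists_between (lt_min hd hR)
  obtain ⟨hrd, hrR⟩ := lt_min_iff.mp hrdR
  have hdM : d ≤ M := (hG 0 (mem_closedBall_self hR.le)).elim le_trans
  have hcomp : ∀ x ∈ closedBall (0 : E) R, |M ^ 2 - ‖G x‖ ^ 2| ≤ M ^ 2 - d ^ 2 := fun x hx => by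
    obtain ⟨hdG, hGM⟩ := hG x hx
    rw [abs_of_nonneg (sub_nonneg.mpr (pow_le_pow_left₀ (norm_nonneg _) hGM 2))]
    exact sub_le_sub_left (pow_le_pow_left₀ hd.le hdG 2) _
  have hkernel {ρ : ℝ} : ∀ x ∈ closedBall (0 : E) ρ, M ^ 2 - ρ ^ 2 ≤ M ^ 2 - ‖x‖ ^ 2 :=
    fun x hx =>
      sub_le_sub_left (pow_le_pow_left₀ (norm_nonneg x) (mem_closedBall_zero_iff.mp hx) 2) _
  have hkernel_nonneg : ∀ x ∈ closedBall (0 : E) R, 0 ≤ M ^ 2 - ‖x‖ ^ 2 := fun x hx =>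
    (sub_nonneg.mpr (pow_le_pow_left₀ hR.le hRM 2)).trans (hkernel x hx)
  have hball : 0 < (μ.restrict (closedBall 0 R)).real (closedBall 0 r) := by
    rw [measureReal_restrict_apply measurableSet_closedBall,
      inter_eq_left.mpr (closedBall_subset_closedBall hrR.le)]
    exact ENNReal.toReal_pos (measure_closedBall_pos _ _ hr).ne' measure_closedBall_lt_top.ne
  have hkernel_int (m : ℕ) : IntegrableOn (fun x => (M ^ 2 - ‖x‖ ^ 2) ^ m) (closedBall 0 R) μ :=
    ContinuousOn.integrableOn_compact (isCompact_closedBall 0 R) (by fun_prop)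
  exact exists_integral_pow_mul_lt_integral_pow (sub_nonneg.mpr (pow_le_pow_left₀ hd.le hdM 2))
    (sub_lt_sub_left (pow_lt_pow_left₀ hrd hr.le two_ne_zero) (M ^ 2))
    ((ae_restrict_mem measurableSet_closedBall).mono hcomp)
    ((ae_restrict_mem measurableSet_closedBall).mono hkernel_nonneg)
    hkernel measurableSet_closedBall hball hw hkernel_int

end Concentration

section MetricProjection

variable {E : Type*} [NormedAddCommGroup E] [InnerProductSpace ℝ E]

lemma norm_sub_le_norm_sub_of_inner_nonpos {u v p q : E} (hup : inner ℝ (u - p) (q - p) ≤ 0)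
    (hvq : inner ℝ (v - q) (p - q) ≤ 0) : ‖p - q‖ ≤ ‖u - v‖ := by
  have hsq : ‖p - q‖ * ‖p - q‖ ≤ ‖u - v‖ * ‖p - q‖ :=
    calc ‖p - q‖ * ‖p - q‖ = inner ℝ (p - q) (p - q) := (real_inner_self_eq_norm_mul_norm _).symm
      _ = inner ℝ (u - v) (p - q) + (inner ℝ (u - p) (q - p) + inner ℝ (v - q) (p - q)) := by
        simp only [inner_sub_left, inner_sub_right]
        ring
      _ ≤ inner ℝ (u - v) (p - q) := add_le_of_nonpos_right (add_nonpos hup hvq)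
      _ ≤ ‖u - v‖ * ‖p - q‖ := real_inner_le_norm _ _
  rcases (norm_nonneg (p - q)).eq_or_lt with h0 | hpos
  · exact h0 ▸ norm_nonneg _
  · exact le_of_mul_le_mul_right hsq hpos

lemma exists_lipschitzWith_one_retraction {s : Set E} (hne : s.Nonempty) (hs : IsComplete s)
    (hconv : Convex ℝ s) : ∃ π : E → E, LipschitzWith 1 π ∧ (∀ x, π x ∈ s) ∧ EqOn π id s := by
  choose π hπs hπ using exists_norm_eq_iInf_of_complete_convex hne hs hconv
  have hπ_inner (x : E) : ∀ w ∈ s, inner ℝ (x - π x) (w - π x) ≤ 0 :=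
    (norm_eq_iInf_iff_real_inner_le_zero hconv (hπs x)).mp (hπ x)
  refine ⟨π, LipschitzWith.of_dist_le_mul fun x y => ?_, hπs, fun x hx => ?_⟩
  · simpa [dist_eq_norm] using
      norm_sub_le_norm_sub_of_inner_nonpos (hπ_inner x _ (hπs y)) (hπ_inner y _ (hπs x))
  · exact (sub_eq_zero.mp (real_inner_self_nonpos.mp (hπ_inner x x hx))).symm

end MetricProjection

section Brouwer

theorem exists_add_eq_zero_of_contDiff {E : Type*} [NormedAddCommGroup E] [InnerProductSpace ℝ E]
    [FiniteDimensional ℝ E] {g : E → E} (hg : ContDiff ℝ 1 g) (hsupp : HasCompactSupport g) :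
    ∃ x, x + g x = 0 := by
  by_contra! hne
  let _ : MeasurableSpace E := borel E
  have : BorelSpace E := ⟨rfl⟩
  have hcont : Continuous fun x => x + g x := continuous_id.add hg.continuous
  have hdet : Continuous fun x => (1 + fderiv ℝ g x).det :=
    ContinuousLinearMap.continuous_det.comp
      (continuous_const.add (hg.continuous_fderiv one_ne_zero))
  obtain ⟨R, hR, hsuppR⟩ := hsupp.isBounded.subset_closedBall_lt 0 0
  have hK : IsCompact (closedBall (0 : E) R) := isCompact_closedBall 0 R
  obtain ⟨d, hd, hdK⟩ :=
    hK.exists_forall_le' hcont.norm.continuousOn fun x _ => norm_pos_iff.mpr (hne x)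
  obtain ⟨M, hRM, hM⟩ := (hK.image hcont).isBounded.subset_closedBall_lt R 0
  obtain ⟨m, hm⟩ := exists_setIntegral_pow_sub_norm_sq_mul_lt (μ := volume) hd hR hRM.le
    (fun x hx => ⟨hdK x hx, mem_closedBall_zero_iff.mp (hM (mem_image_of_mem _ hx))⟩)
    (hdet.continuousOn.integrableOn_compact hK)
  exact hm.ne <| setIntegral_comp_add_mul_det_eq (k := fun y => (M ^ 2 - ‖y‖ ^ 2) ^ m) hg hK
    ((subset_tsupport g).trans hsuppR) (by fun_prop)
    fun x v => (isPolynomialFunctionOfDegreeLE_sub_norm_add_smul_sq _ x v).pow m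

theorem exists_add_eq_zero_of_hasCompactSupport {E : Type*} [NormedAddCommGroup E]
    [InnerProductSpace ℝ E] [FiniteDimensional ℝ E] {g : E → E} (hg : Continuous g)
    (hsupp : HasCompactSupport g) : ∃ x, x + g x = 0 := by
  by_contra! hne
  obtain ⟨q, hq, hqg, hqsupp⟩ := hg.exists_contDiff_approx 1 (continuous_id.add hg).norm
    fun x => norm_pos_iff.mpr (hne x)
  obtain ⟨x, hx⟩ := exists_add_eq_zero_of_contDiff hq (hsupp.mono hqsupp)
  have hdist : dist (q x) (g x) = ‖x + g x‖ := by
    rw [dist_comm, dist_eq_norm, eq_neg_of_add_eq_zero_right hx, sub_neg_eq_add, add_comm]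
  exact (hqg x).ne hdist

theorem exists_isFixedPt_of_isBounded_range {E : Type*} [NormedAddCommGroup E]
    [InnerProductSpace ℝ E] [FiniteDimensional ℝ E] {h : E → E} (hh : Continuous h)
    (hbdd : Bornology.IsBounded (range h)) : ∃ x, IsFixedPt h x := by
  obtain ⟨R, hR, hhR⟩ := hbdd.subset_closedBall_lt 0 0
  let cutoff : ContDiffBump (0 : E) := ⟨R, R + 1, hR, lt_add_one R⟩
  obtain ⟨x, hx⟩ := exists_add_eq_zero_of_hasCompactSupport (g := fun x => -(cutoff x • h x))
    (cutoff.continuous.smul hh).neg cutoff.hasCompactSupport.smul_right.neg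
  have hxh : cutoff x • h x = x := (sub_eq_zero.mp (by rwa [sub_eq_add_neg])).symm
  have hxR : x ∈ closedBall 0 R := mem_closedBall_zero_iff.mpr <|
    calc ‖x‖ = cutoff x * ‖h x‖ := by
          rw [← norm_smul_of_nonneg cutoff.nonneg, hxh]
      _ ≤ ‖h x‖ := mul_le_of_le_one_left (norm_nonneg _) cutoff.le_one
      _ ≤ R := mem_closedBall_zero_iff.mp (hhR (mem_range_self x))
  exact ⟨x, by rwa [cutoff.one_of_mem_closedBall hxR, one_smul] at hxh⟩

lemma exists_isFixedPt_of_mapsTo_of_innerProductSpace {E : Type*} [NormedAddCommGroup E]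
    [InnerProductSpace ℝ E] [FiniteDimensional ℝ E] {s : Set E} {f : E → E} (hs : IsCompact s)
    (hconv : Convex ℝ s) (hne : s.Nonempty) (hf : ContinuousOn f s) (hmaps : MapsTo f s s) :
    ∃ x ∈ s, IsFixedPt f x := by
  obtain ⟨π, hπ, hπs, hπ_id⟩ := exists_lipschitzWith_one_retraction hne hs.isComplete hconv
  obtain ⟨x, hx : f (π x) = x⟩ := exists_isFixedPt_of_isBounded_range
    (hf.comp_continuous hπ.continuous hπs)
    (hs.isBounded.subset (range_subset_iff.mpr fun x => hmaps (hπs x)))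
  have hxs : x ∈ s := hx ▸ hmaps (hπs x)
  exact ⟨x, hxs, by rwa [hπ_id hxs] at hx⟩

theorem exists_isFixedPt_of_isCompact_of_convex {E : Type*} [AddCommGroup E] [Module ℝ E]
    [TopologicalSpace E] [IsTopologicalAddGroup E] [ContinuousSMul ℝ E] [T2Space E]
    [FiniteDimensional ℝ E] {s : Set E} {f : E → E} (hs : IsCompact s) (hconv : Convex ℝ s)
    (hne : s.Nonempty) (hf : ContinuousOn f s) (hmaps : MapsTo f s s) :
    ∃ x ∈ s, IsFixedPt f x := by
  let e := toEuclidean (E := E)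
  have hmem : ∀ y ∈ e '' s, e.symm y ∈ s := by
    rintro _ ⟨x, hx, rfl⟩
    rwa [e.symm_apply_apply]
  obtain ⟨y, hy, hfix⟩ := exists_isFixedPt_of_mapsTo_of_innerProductSpace
    (f := fun y => e (f (e.symm y))) (hs.image e.continuous)
    (hconv.linear_image e.toLinearEquiv.toLinearMap) (hne.image e)
    (e.continuous.comp_continuousOn (hf.comp e.symm.continuous.continuousOn hmem))
    fun y hy => mem_image_of_mem e (hmaps (hmem y hy))
  exact ⟨e.symm y, hmem y hy, (e.symm_apply_eq.mpr (IsFixedPt.eq hfix).symm).symm⟩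

end Brouwer

section ClosedCovers

/-- A product of standard simplexes, one for each index `j`, in barycentric coordinates. -/
def simplotope {ι : Type*} (κ : ι → Type*) [∀ j, Fintype (κ j)] : Set (∀ j, κ j → ℝ) :=
  univ.pi fun j => stdSimplex ℝ (κ j)

variable {ι : Type*} {κ : ι → Type*} [∀ j, Fintype (κ j)]

lemma isCompact_simplotope : IsCompact (simplotope κ) :=
  isCompact_univ_pi fun j => isCompact_stdSimplex ℝ (κ j)

lemma convex_simplotope : Convex ℝ (simplotope κ) :=
  convex_pi fun j _ => convex_stdSimplex ℝ (κ j)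

lemma simplotope_nonempty [∀ j, Nonempty (κ j)] : (simplotope κ).Nonempty :=
  univ_pi_nonempty_iff.mpr fun j =>
    nonempty_coe_sort.mp (inferInstanceAs (Nonempty (stdSimplex ℝ (κ j))))

lemma div_sum_mem_stdSimplex {𝕜 n : Type*} [Field 𝕜] [LinearOrder 𝕜] [IsStrictOrderedRing 𝕜]
    [Fintype n] {w : n → 𝕜} (hw : ∀ k, 0 ≤ w k) (hsum : ∑ k, w k ≠ 0) :
    (fun k => w k / ∑ i, w i) ∈ stdSimplex 𝕜 n :=
  ⟨fun k => div_nonneg (hw k) (Finset.sum_nonneg fun i _ => hw i), by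
    rw [← Finset.sum_div, div_self hsum]⟩

lemma exists_continuous_nonneg_eq_zero_iff_mem {X : Type*} [TopologicalSpace X]
    [PerfectlyNormalSpace X] {s : Set X} (hs : IsClosed s) :
    ∃ f : X → ℝ, Continuous f ∧ (∀ x, 0 ≤ f x) ∧ ∀ x, f x = 0 ↔ x ∈ s := by
  obtain ⟨f, rfl, hf⟩ := perfectlyNormalSpace_iff_forall_isClosed_preimage_zero.mp ‹_› s hs
  exact ⟨f, f.continuous, fun x => (hf x).1, fun x => Iff.rfl⟩

lemma exists_perm_forall_mapsTo_imp_eq_univ (n : Type*) [Finite n] :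
    ∃ σ : Equiv.Perm n, ∀ s : Set n, s.Nonempty → MapsTo σ s s → s = univ := by
  cases nonempty_fintype n
  classical
  obtain ⟨σ, hσ, -⟩ := (Finset.univ : Finset n).exists_cycleOn
  refine ⟨σ, fun s ⟨a, ha⟩ hmaps => eq_univ_of_forall fun b => ?_⟩
  obtain ⟨m, -, rfl⟩ := hσ.exists_pow_eq (Finset.mem_univ a) (Finset.mem_univ b)
  rw [← Equiv.Perm.iterate_eq_pow]
  exact hmaps.iterate m ha

theorem freund_dual_covering_lemma_general [Finite ι] [∀ j, Nonempty (κ j)]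
    {C : ∀ j, κ j → Set (∀ j, κ j → ℝ)} (hclosed : ∀ j k, IsClosed (C j k))
    (hcover : simplotope κ ⊆ ⋃ j, ⋃ k, C j k)
    (hfacet : ∀ j k, {t ∈ simplotope κ | t j k = 0} ⊆ C j k) :
    ∃ j, (simplotope κ ∩ ⋂ k, C j k).Nonempty := by
  cases nonempty_fintype ι
  by_contra! hempty
  choose f hf hf_nonneg hf_zero using
    fun j k => exists_continuous_nonneg_eq_zero_iff_mem (hclosed j k)
  choose σ hσ using fun j => exists_perm_forall_mapsTo_imp_eq_univ (κ j)
  have hnot_all : ∀ t ∈ simplotope κ, ∀ j, ¬∀ k, t ∈ C j k := fun t ht j hall =>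
    notMem_empty t <| hempty j ▸ ⟨ht, mem_iInter.mpr hall⟩
  have hsum : ∀ t ∈ simplotope κ, ∀ j, ∑ k, f j ((σ j).symm k) t ≠ 0 := fun t ht j h0 => by
    rw [Equiv.sum_comp (σ j).symm fun k => f j k t,
      Finset.sum_eq_zero_iff_of_nonneg fun k _ => hf_nonneg j k t] at h0
    exact hnot_all t ht j fun k => (hf_zero j k t).mp (h0 k (Finset.mem_univ k))
  let F (t : ∀ j, κ j → ℝ) (j : ι) (k : κ j) : ℝ :=
    f j ((σ j).symm k) t / ∑ i, f j ((σ j).symm i) t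
  have hF : ContinuousOn F (simplotope κ) := continuousOn_pi.mpr fun j => continuousOn_pi.mpr
    fun k => (hf j _).continuousOn.div
      (continuous_finsetSum _ fun i _ => hf j _).continuousOn fun t ht => hsum t ht j
  have hF_maps : MapsTo F (simplotope κ) (simplotope κ) := fun t ht j _ =>
    div_sum_mem_stdSimplex (fun k => hf_nonneg j _ t) (hsum t ht j)
  obtain ⟨t, ht, hfix⟩ := exists_isFixedPt_of_isCompact_of_convex isCompact_simplotope
    convex_simplotope simplotope_nonempty hF hF_maps
  obtain ⟨j, k, htk⟩ : ∃ j k, t ∈ C j k := by simpa only [mem_iUnion] using hcover ht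
  have hshift : MapsTo (σ j) {k | t ∈ C j k} {k | t ∈ C j k} := fun k hk => by
    refine hfacet j (σ j k) ⟨ht, ?_⟩
    rw [← hfix.eq]
    simp only [F, Equiv.symm_apply_apply, (hf_zero j k t).mpr hk, zero_div]
  exact hnot_all t ht j (eq_univ_iff_forall.mp (hσ j _ ⟨k, htk⟩ hshift))

end ClosedCovers

/-- Freund's dual covering lemma for simplotopes: let `T` be a product of `β`
standard simplexes (the `j`-th of dimension `α j`, with `α j + 1` vertices).
If closed sets `C j k` cover `T` and each `C j k` contains the facet
`{t ∈ T : t j k = 0}`, then for some factor `j` the sets `C j k`, over all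
vertices `k` of that factor, have a common point. -/
theorem freund_dual_covering_lemma (β : ℕ) (hβ : 0 < β) (α : Fin β → ℕ)
    (T : Set ((j : Fin β) → (Fin (α j + 1) → ℝ)))
    (hT : T = {t | ∀ j, t j ∈ stdSimplex ℝ (Fin (α j + 1))})
    (C : (j : Fin β) → Fin (α j + 1) → Set ((j : Fin β) → (Fin (α j + 1) → ℝ)))
    (hclosed : ∀ j k, IsClosed (C j k))
    (hcover : (⋃ j, ⋃ k, C j k) = T)
    (hfacet : ∀ j k, {t ∈ T | t j k = 0} ⊆ C j k) :
    ∃ j, (⋂ k, C j k).Nonempty := by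
  obtain rfl : T = simplotope fun j => Fin (α j + 1) := by ext t; simp [hT, simplotope]
  exact (freund_dual_covering_lemma_general hclosed hcover.ge hfacet).imp fun j hj => hj.right
end
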